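/- arXiv:1708.09339 — 12 statements merged into one kernel-verified Lean document; each statement's English description precedes it below -/
import Mathlib

section
/- For contact angle γ = π/2, the dimensionless total force curve is centrally symmetric about the point (π/2, F(π/2)): for every φ ∈ ℝ, F(φ) + F(π − φ) = 2·F(π/2) = −2·A·C² + π·C². -/
/-- For contact angle `γ = π/2`, the dimensionless total force curve is centrally symmetric
about `(π/2, F(π/2))`: `F(φ) + F(π − φ) = 2·F(π/2) = −2·A·C² + π·C²` for every `φ`. -/
theorem total_force_central_symmetry (A C : ℝ) (hA : 0 < A) (hC : 0 < C)
    (F : ℝ → ℝ)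
    (hF : F = fun φ => -A * C ^ 2 - 2 * Real.sin (φ + Real.pi / 2)
      - 4 * C * Real.cos ((φ + Real.pi / 2) / 2) * Real.sin φ
      - (1 / 2) * C ^ 2 * Real.sin (2 * φ) + C ^ 2 * φ) :
    ∀ φ : ℝ, F φ + F (Real.pi - φ) = 2 * F (Real.pi / 2) ∧
      2 * F (Real.pi / 2) = -2 * A * C ^ 2 + Real.pi * C ^ 2 := by
  intro φ
  have hmid : 2 * F (Real.pi / 2) = -2 * A * C ^ 2 + Real.pi * C ^ 2 := by
    simp only [hF, add_halves, mul_div_cancel₀ Real.pi (two_ne_zero' ℝ), Real.sin_pi,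
      Real.cos_pi_div_two]
    ring
  refine ⟨?_, hmid⟩
  have hsin : Real.sin (Real.pi - φ + Real.pi / 2) = -Real.sin (φ + Real.pi / 2) := by
    rw [Real.sin_add_pi_div_two, Real.sin_add_pi_div_two, Real.cos_pi_sub]
  have hcos : Real.cos ((Real.pi - φ + Real.pi / 2) / 2)
      = -Real.cos ((φ + Real.pi / 2) / 2) := by
    rw [← Real.cos_pi_sub]
    ring_nf
  have hsin_two : Real.sin (2 * (Real.pi - φ)) = -Real.sin (2 * φ) := by
    rw [mul_sub, Real.sin_two_pi_sub]
  rw [hmid]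
  simp only [hF, hsin, hcos, hsin_two, Real.sin_pi_sub]
  ring
end

section
/- For contact angle γ = π/2 and any C > 0, the second derivative of the dimensionless total force is strictly positive on (0, π/2): for every φ ∈ (0, π/2), F″(φ) = 2·cos φ + C·cos(φ/2 + π/4)·sin φ + 4·C·sin(3φ/2 + π/4) + 2·C²·sin(2φ) > 0. -/
/-- For `γ = π/2` and any `C > 0`, the second derivative of the dimensionless total force is
strictly positive on `(0, π/2)`, with the explicit formula
`F″(φ) = 2·cos φ + C·cos(φ/2 + π/4)·sin φ + 4·C·sin(3φ/2 + π/4) + 2·C²·sin(2φ)`. -/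
theorem total_force_second_deriv_pos (A C : ℝ) (hA : 0 < A) (hC : 0 < C)
    (F : ℝ → ℝ)
    (hF : F = fun φ => -A * C ^ 2 - 2 * Real.sin (φ + Real.pi / 2)
      - 4 * C * Real.cos ((φ + Real.pi / 2) / 2) * Real.sin φ
      - (1 / 2) * C ^ 2 * Real.sin (2 * φ) + C ^ 2 * φ) :
    ∀ φ ∈ Set.Ioo (0 : ℝ) (Real.pi / 2),
      deriv (deriv F) φ = 2 * Real.cos φ + C * Real.cos (φ / 2 + Real.pi / 4) * Real.sin φ
        + 4 * C * Real.sin (3 * φ / 2 + Real.pi / 4) + 2 * C ^ 2 * Real.sin (2 * φ) ∧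
      0 < 2 * Real.cos φ + C * Real.cos (φ / 2 + Real.pi / 4) * Real.sin φ
        + 4 * C * Real.sin (3 * φ / 2 + Real.pi / 4) + 2 * C ^ 2 * Real.sin (2 * φ) := by
  have hF' : deriv F = fun φ => -2 * Real.cos (φ + Real.pi / 2)
      + 2 * C * Real.sin ((φ + Real.pi / 2) / 2) * Real.sin φ
      - 4 * C * Real.cos ((φ + Real.pi / 2) / 2) * Real.cos φ
      - C ^ 2 * Real.cos (2 * φ) + C ^ 2 := by
    funext x
    have hhalf : HasDerivAt (fun φ : ℝ => (φ + Real.pi / 2) / 2) (1 / 2) x :=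
      ((hasDerivAt_id x).add_const _).div_const 2
    have hdouble : HasDerivAt (fun φ : ℝ => 2 * φ) (2 * 1) x := (hasDerivAt_id x).const_mul 2
    have hshift : HasDerivAt (fun φ : ℝ => φ + Real.pi / 2) 1 x := (hasDerivAt_id x).add_const _
    have h := (((((hshift.sin.const_mul 2).const_sub (-A * C ^ 2)).sub
      ((hhalf.cos.const_mul (4 * C)).mul (Real.hasDerivAt_sin x))).sub
      (hdouble.sin.const_mul ((1 / 2) * C ^ 2))).add ((hasDerivAt_id x).const_mul (C ^ 2)))
    rw [hF]
    refine (h.congr_deriv ?_).deriv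
    ring
  intro φ ⟨hφ0, hφ1⟩
  constructor
  · have hhalf : HasDerivAt (fun φ : ℝ => (φ + Real.pi / 2) / 2) (1 / 2) φ :=
      ((hasDerivAt_id φ).add_const _).div_const 2
    have hdouble : HasDerivAt (fun φ : ℝ => 2 * φ) (2 * 1) φ := (hasDerivAt_id φ).const_mul 2
    have hshift : HasDerivAt (fun φ : ℝ => φ + Real.pi / 2) 1 φ := (hasDerivAt_id φ).add_const _
    have h := (((((hshift.cos.const_mul (-2)).add
      ((hhalf.sin.const_mul (2 * C)).mul (Real.hasDerivAt_sin φ))).sub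
      ((hhalf.cos.const_mul (4 * C)).mul (Real.hasDerivAt_cos φ))).sub
      (hdouble.cos.const_mul (C ^ 2))).add_const (C ^ 2))
    rw [hF']
    refine (h.congr_deriv ?_).deriv
    rw [show 3 * φ / 2 + Real.pi / 4 = (φ + Real.pi / 2) / 2 + φ by ring,
      show φ / 2 + Real.pi / 4 = (φ + Real.pi / 2) / 2 by ring, Real.sin_add _ φ,
      Real.sin_add_pi_div_two]
    ring
  · have hcos : 0 < Real.cos φ := Real.cos_pos_of_mem_Ioo ⟨by linarith, hφ1⟩
    have hsin : 0 < Real.sin φ := Real.sin_pos_of_pos_of_lt_pi hφ0 (by linarith)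
    have hcos_half : 0 < Real.cos (φ / 2 + Real.pi / 4) :=
      Real.cos_pos_of_mem_Ioo ⟨by linarith, by linarith⟩
    have hsin_triple : 0 < Real.sin (3 * φ / 2 + Real.pi / 4) :=
      Real.sin_pos_of_pos_of_lt_pi (by linarith) (by linarith)
    have hsin_double : 0 < Real.sin (2 * φ) :=
      Real.sin_pos_of_pos_of_lt_pi (by linarith) (by linarith)
    positivity
end

section
/- For contact angle γ = π/2 and any A > 0, C > 0, the dimensionless total force F has exactly one critical point in (0, π/2) and exactly one critical point in (π/2, π): there is a unique φ₁ ∈ (0, π/2) with F′(φ₁) = 0 and a unique φ₂ ∈ (π/2, π) with F′(φ₂) = 0. -/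
/-- The derivative of the total force at `φ = x + π/2`, for contact angle `π/2`. -/
noncomputable def totalForceSlope (C x : ℝ) : ℝ :=
  2 * Real.cos x + 2 * C * (Real.cos (x / 2) * Real.cos x)
    - 4 * C * (Real.sin (x / 2) * Real.sin x) + 2 * C ^ 2 * Real.cos x ^ 2

lemma totalForceSlope_neg (C x : ℝ) : totalForceSlope C (-x) = totalForceSlope C x := by
  simp [totalForceSlope, neg_div]

lemma continuous_totalForceSlope (C : ℝ) : Continuous (totalForceSlope C) := by
  unfold totalForceSlope
  fun_prop

lemma totalForceSlope_strictAntiOn {C : ℝ} (hC : 0 < C) :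
    StrictAntiOn (totalForceSlope C) (Set.Icc 0 (Real.pi / 2)) := by
  rintro x ⟨hx0, hx⟩ y ⟨hy0, hy⟩ hxy
  have hpi := Real.pi_pos
  have hcos : Real.cos y < Real.cos x :=
    Real.cos_lt_cos_of_nonneg_of_le_pi hx0 (by linarith) hxy
  have hcos_half : Real.cos (y / 2) ≤ Real.cos (x / 2) :=
    Real.cos_le_cos_of_nonneg_of_le_pi (by linarith) (by linarith) (by linarith)
  have hsin : Real.sin x ≤ Real.sin y :=
    Real.sin_le_sin_of_le_of_le_pi_div_two (by linarith) hy hxy.le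
  have hsin_half : Real.sin (x / 2) ≤ Real.sin (y / 2) :=
    Real.sin_le_sin_of_le_of_le_pi_div_two (by linarith) (by linarith) (by linarith)
  have hcos_nonneg : 0 ≤ Real.cos y := Real.cos_nonneg_of_mem_Icc ⟨by linarith, hy⟩
  have hcos_half_nonneg : 0 ≤ Real.cos (x / 2) :=
    Real.cos_nonneg_of_mem_Icc ⟨by linarith, by linarith⟩
  have hsin_nonneg : 0 ≤ Real.sin x := Real.sin_nonneg_of_nonneg_of_le_pi hx0 (by linarith)
  have hsin_half_nonneg : 0 ≤ Real.sin (y / 2) :=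
    Real.sin_nonneg_of_nonneg_of_le_pi (by linarith) (by linarith)
  have hcos_mul : 2 * C * (Real.cos (y / 2) * Real.cos y)
      ≤ 2 * C * (Real.cos (x / 2) * Real.cos x) := by gcongr
  have hsin_mul : 4 * C * (Real.sin (x / 2) * Real.sin x)
      ≤ 4 * C * (Real.sin (y / 2) * Real.sin y) := by gcongr
  have hcos_sq : 2 * C ^ 2 * Real.cos y ^ 2 ≤ 2 * C ^ 2 * Real.cos x ^ 2 := by gcongr
  unfold totalForceSlope
  linarith

lemma exists_totalForceSlope_eq_zero {C : ℝ} (hC : 0 < C) :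
    ∃ x ∈ Set.Ioo 0 (Real.pi / 2), totalForceSlope C x = 0 := by
  have hpi := Real.pi_pos
  have h_zero : 0 < totalForceSlope C 0 := by
    simp only [totalForceSlope, zero_div, Real.cos_zero, Real.sin_zero]
    nlinarith [sq_nonneg C]
  have h_end : totalForceSlope C (Real.pi / 2) < 0 := by
    have hsin : 0 < Real.sin (Real.pi / 2 / 2) :=
      Real.sin_pos_of_pos_of_lt_pi (by linarith) (by linarith)
    have : 0 < 4 * C * Real.sin (Real.pi / 2 / 2) := by positivity
    simp only [totalForceSlope, Real.cos_pi_div_two, Real.sin_pi_div_two]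
    linarith
  exact intermediate_value_Ioo' (by positivity) (continuous_totalForceSlope C).continuousOn
    ⟨h_end, h_zero⟩

lemma hasDerivAt_totalForce (A C φ : ℝ) :
    HasDerivAt (fun φ => -A * C ^ 2 - 2 * Real.sin (φ + Real.pi / 2)
      - 4 * C * Real.cos ((φ + Real.pi / 2) / 2) * Real.sin φ
      - (1 / 2) * C ^ 2 * Real.sin (2 * φ) + C ^ 2 * φ)
      (totalForceSlope C (φ - Real.pi / 2)) φ := by
  have h_shift : HasDerivAt (fun φ : ℝ => φ + Real.pi / 2) 1 φ :=
    (hasDerivAt_id φ).add_const _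
  have h_double : HasDerivAt (fun φ : ℝ => 2 * φ) (2 * 1) φ := (hasDerivAt_id φ).const_mul 2
  have h := (((((h_shift.sin).const_mul 2).const_sub (-A * C ^ 2)).sub
    ((((h_shift.div_const 2).cos).const_mul (4 * C)).mul (Real.hasDerivAt_sin φ))).sub
    ((h_double.sin).const_mul ((1 / 2) * C ^ 2))).add ((hasDerivAt_id φ).const_mul (C ^ 2))
  refine h.congr_deriv ?_
  have h_half : (φ - Real.pi / 2) / 2 = (φ + Real.pi / 2) / 2 - Real.pi / 2 := by ring
  rw [totalForceSlope, h_half]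
  simp only [Real.cos_sub_pi_div_two, Real.sin_sub_pi_div_two, Real.cos_add_pi_div_two,
    Real.cos_two_mul]
  linear_combination (-2 * C ^ 2) * Real.sin_sq_add_cos_sq φ

/-- For `γ = π/2` and any `A, C > 0`, the dimensionless total force has exactly one critical
point in `(0, π/2)` and exactly one critical point in `(π/2, π)`. -/
theorem total_force_two_critical_points (A C : ℝ) (hA : 0 < A) (hC : 0 < C)
    (F : ℝ → ℝ)
    (hF : F = fun φ => -A * C ^ 2 - 2 * Real.sin (φ + Real.pi / 2)
      - 4 * C * Real.cos ((φ + Real.pi / 2) / 2) * Real.sin φ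
      - (1 / 2) * C ^ 2 * Real.sin (2 * φ) + C ^ 2 * φ) :
    (∃! φ₁ : ℝ, φ₁ ∈ Set.Ioo (0 : ℝ) (Real.pi / 2) ∧ deriv F φ₁ = 0) ∧
    (∃! φ₂ : ℝ, φ₂ ∈ Set.Ioo (Real.pi / 2) Real.pi ∧ deriv F φ₂ = 0) := by
  have hderiv (φ : ℝ) : deriv F φ = totalForceSlope C (φ - Real.pi / 2) := by
    rw [hF]
    exact (hasDerivAt_totalForce A C φ).deriv
  obtain ⟨x, hx, hx_zero⟩ := exists_totalForceSlope_eq_zero hC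
  have huniq {y : ℝ} (hy : y ∈ Set.Ioo 0 (Real.pi / 2)) (hy_zero : totalForceSlope C y = 0) :
      y = x :=
    (totalForceSlope_strictAntiOn hC).injOn (Set.Ioo_subset_Icc_self hy)
      (Set.Ioo_subset_Icc_self hx) (hy_zero.trans hx_zero.symm)
  obtain ⟨hx0, hx1⟩ := hx
  simp only [hderiv]
  constructor
  · refine ⟨Real.pi / 2 - x, ⟨⟨by linarith, by linarith⟩, ?_⟩, ?_⟩
    · rw [← totalForceSlope_neg, ← hx_zero]
      ring_nf
    · rintro φ ⟨⟨h0, h1⟩, hφ⟩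
      rw [← totalForceSlope_neg] at hφ
      linarith [huniq ⟨by linarith, by linarith⟩ hφ]
  · refine ⟨Real.pi / 2 + x, ⟨⟨by linarith, by linarith⟩, ?_⟩, ?_⟩
    · rw [← hx_zero]
      ring_nf
    · rintro φ ⟨⟨h0, h1⟩, hφ⟩
      linarith [huniq ⟨by linarith, by linarith⟩ hφ]
end

section
/- Let γ ∈ (π/2, π) and C > 0 satisfy 2·C·cos(γ/2) + cos γ > 0. Then for every φ ∈ (0, π/4], the second derivative of the dimensionless total force is strictly positive: F″(φ) = (C/2)·(cos(γ/2)·sin(φ/2) − sin(γ/2)·cos(φ/2) + 9·cos(γ/2)·sin(3φ/2) + 9·sin(γ/2)·cos(3φ/2)) + 2·C²·sin(2φ) + 2·cos γ·sin φ + 2·sin γ·cos φ > 0. -/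
/-- The second derivative of the total force, with its terms expanded at half angles. -/
theorem total_force_deriv_deriv (γ A C φ : ℝ) :
    deriv (deriv fun φ : ℝ => -A * C ^ 2 - 2 * Real.sin (φ + γ)
      - 4 * C * Real.cos ((φ + γ) / 2) * Real.sin φ
      - (1 / 2) * C ^ 2 * Real.sin (2 * φ) + C ^ 2 * φ) φ =
    (C / 2) * (Real.cos (γ / 2) * Real.sin (φ / 2) - Real.sin (γ / 2) * Real.cos (φ / 2)
        + 9 * Real.cos (γ / 2) * Real.sin (3 * φ / 2)
        + 9 * Real.sin (γ / 2) * Real.cos (3 * φ / 2))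
      + 2 * C ^ 2 * Real.sin (2 * φ)
      + 2 * Real.cos γ * Real.sin φ + 2 * Real.sin γ * Real.cos φ := by
  have hsum (x : ℝ) : HasDerivAt (fun x : ℝ => x + γ) 1 x := (hasDerivAt_id x).add_const γ
  have hhalf (x : ℝ) : HasDerivAt (fun x : ℝ => (x + γ) / 2) (1 / 2) x := (hsum x).div_const 2
  have hdouble (x : ℝ) : HasDerivAt (fun x : ℝ => 2 * x) (2 * 1) x :=
    (hasDerivAt_id x).const_mul 2
  have hfirst : (deriv fun φ : ℝ => -A * C ^ 2 - 2 * Real.sin (φ + γ)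
      - 4 * C * Real.cos ((φ + γ) / 2) * Real.sin φ
      - (1 / 2) * C ^ 2 * Real.sin (2 * φ) + C ^ 2 * φ) =
      fun φ : ℝ => -2 * Real.cos (φ + γ) + 2 * C * (Real.sin ((φ + γ) / 2) * Real.sin φ)
        - 4 * C * (Real.cos ((φ + γ) / 2) * Real.cos φ) - C ^ 2 * Real.cos (2 * φ) + C ^ 2 := by
    funext x
    refine HasDerivAt.deriv ?_
    refine ((((((hsum x).sin.const_mul 2).const_sub (-A * C ^ 2)).sub
      (((hhalf x).cos.const_mul (4 * C)).mul (Real.hasDerivAt_sin x))).sub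
      ((hdouble x).sin.const_mul ((1 / 2) * C ^ 2))).add
      ((hasDerivAt_id x).const_mul (C ^ 2))).congr_deriv ?_
    ring
  have hsecond : HasDerivAt (fun φ : ℝ => -2 * Real.cos (φ + γ)
        + 2 * C * (Real.sin ((φ + γ) / 2) * Real.sin φ)
        - 4 * C * (Real.cos ((φ + γ) / 2) * Real.cos φ) - C ^ 2 * Real.cos (2 * φ) + C ^ 2)
      (2 * Real.sin (φ + γ) + C * (5 * (Real.cos ((φ + γ) / 2) * Real.sin φ)
        + 4 * (Real.sin ((φ + γ) / 2) * Real.cos φ)) + 2 * C ^ 2 * Real.sin (2 * φ)) φ := by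
    refine ((((((hsum φ).cos.const_mul (-2)).add
      (((hhalf φ).sin.mul (Real.hasDerivAt_sin φ)).const_mul (2 * C))).sub
      (((hhalf φ).cos.mul (Real.hasDerivAt_cos φ)).const_mul (4 * C))).sub
      ((hdouble φ).cos.const_mul (C ^ 2))).add_const (C ^ 2)).congr_deriv ?_
    ring
  rw [hfirst, hsecond.deriv, Real.sin_add, show (φ + γ) / 2 = φ / 2 + γ / 2 by ring,
    show 3 * φ / 2 = φ / 2 + φ by ring, Real.cos_add (φ / 2) (γ / 2),
    Real.sin_add (φ / 2) (γ / 2), Real.sin_add (φ / 2) φ, Real.cos_add (φ / 2) φ]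
  have hs : Real.sin φ = 2 * Real.sin (φ / 2) * Real.cos (φ / 2) := by
    rw [← Real.sin_two_mul]; ring_nf
  have hc : Real.cos φ = 2 * Real.cos (φ / 2) ^ 2 - 1 := by
    rw [← Real.cos_two_mul]; ring_nf
  have hpyth := Real.sin_sq_add_cos_sq (φ / 2)
  rw [hs, hc]
  generalize Real.sin (φ / 2) = q at *
  generalize Real.cos (φ / 2) = p at *
  linear_combination -C * Real.sin (γ / 2) * p * hpyth

/-- For `φ ≤ π/4` the half angle satisfies `cos² (φ/2) > 7/9`. -/
theorem seven_ninths_lt_cos_half_sq {φ : ℝ} (h0 : 0 < φ) (h1 : φ ≤ Real.pi / 4) :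
    7 / 9 < Real.cos (φ / 2) ^ 2 := by
  have hcos : Real.cos (Real.pi / 4) ≤ Real.cos φ :=
    Real.cos_le_cos_of_nonneg_of_le_pi h0.le (by linarith [Real.pi_pos]) h1
  have hsqrt : (10 / 9 : ℝ) < √2 := Real.lt_sqrt_of_sq_lt (by norm_num)
  have hdouble : Real.cos φ = 2 * Real.cos (φ / 2) ^ 2 - 1 := by
    rw [← Real.cos_two_mul]; ring_nf
  rw [Real.cos_pi_div_four] at hcos
  linarith

/-- For `γ ∈ (π/2, π)` and `C > 0` with `2·C·cos(γ/2) + cos γ > 0`, the second derivative of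
the dimensionless total force is strictly positive on `(0, π/4]`, with the explicit formula. -/
theorem total_force_second_deriv_pos_obtuse (γ A C : ℝ)
    (hγ : γ ∈ Set.Ioo (Real.pi / 2) Real.pi) (hA : 0 < A) (hC : 0 < C)
    (hcond : 0 < 2 * C * Real.cos (γ / 2) + Real.cos γ)
    (F : ℝ → ℝ)
    (hF : F = fun φ => -A * C ^ 2 - 2 * Real.sin (φ + γ)
      - 4 * C * Real.cos ((φ + γ) / 2) * Real.sin φ
      - (1 / 2) * C ^ 2 * Real.sin (2 * φ) + C ^ 2 * φ) :
    ∀ φ ∈ Set.Ioc (0 : ℝ) (Real.pi / 4),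
      deriv (deriv F) φ =
        (C / 2) * (Real.cos (γ / 2) * Real.sin (φ / 2) - Real.sin (γ / 2) * Real.cos (φ / 2)
          + 9 * Real.cos (γ / 2) * Real.sin (3 * φ / 2)
          + 9 * Real.sin (γ / 2) * Real.cos (3 * φ / 2))
        + 2 * C ^ 2 * Real.sin (2 * φ)
        + 2 * Real.cos γ * Real.sin φ + 2 * Real.sin γ * Real.cos φ ∧
      0 < (C / 2) * (Real.cos (γ / 2) * Real.sin (φ / 2) - Real.sin (γ / 2) * Real.cos (φ / 2)
          + 9 * Real.cos (γ / 2) * Real.sin (3 * φ / 2)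
          + 9 * Real.sin (γ / 2) * Real.cos (3 * φ / 2))
        + 2 * C ^ 2 * Real.sin (2 * φ)
        + 2 * Real.cos γ * Real.sin φ + 2 * Real.sin γ * Real.cos φ := by
  intro φ hφ
  obtain ⟨h0, h1⟩ := hφ
  obtain ⟨hγ0, hγ1⟩ := hγ
  have hpi := Real.pi_pos
  refine ⟨by rw [hF, total_force_deriv_deriv], ?_⟩
  have hcγ : 0 < Real.cos (γ / 2) := Real.cos_pos_of_mem_Ioo ⟨by linarith, by linarith⟩
  have hsγ : 0 < Real.sin (γ / 2) := Real.sin_pos_of_pos_of_lt_pi (by linarith) (by linarith)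
  have hq : 0 < Real.sin (φ / 2) := Real.sin_pos_of_pos_of_lt_pi (by linarith) (by linarith)
  have hp : 0 < Real.cos (φ / 2) := Real.cos_pos_of_mem_Ioo ⟨by linarith, by linarith⟩
  have hsinφ : 0 < Real.sin φ := Real.sin_pos_of_pos_of_lt_pi (by linarith) (by linarith)
  have hcosφ : 0 < Real.cos φ := Real.cos_pos_of_mem_Ioo ⟨by linarith, by linarith⟩
  have hsinγ : 0 < Real.sin γ := Real.sin_pos_of_pos_of_lt_pi (by linarith) hγ1
  have hsin2 : 0 < Real.sin (2 * φ) := Real.sin_pos_of_pos_of_lt_pi (by linarith) (by linarith)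
  have hsq := seven_ninths_lt_cos_half_sq h0 h1
  have hpyth := Real.sin_sq_add_cos_sq (φ / 2)
  have hs : Real.sin φ = 2 * Real.sin (φ / 2) * Real.cos (φ / 2) := by
    rw [← Real.sin_two_mul]; ring_nf
  have hforce : 0 < (2 * C * Real.cos (γ / 2) + Real.cos γ) * Real.sin φ := mul_pos hcond hsinφ
  have hcross : 0 < Real.sin γ * Real.cos φ := mul_pos hsinγ hcosφ
  have hquad : 0 < C ^ 2 * Real.sin (2 * φ) := mul_pos (pow_pos hC 2) hsin2
  have hsinterm : 0 < C * Real.sin (γ / 2) *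
      (Real.cos (φ / 2) * (9 * Real.cos (φ / 2) ^ 2 - 7)) :=
    mul_pos (mul_pos hC hsγ) (mul_pos hp (by linarith))
  have hcosterm : 0 < C * Real.cos (γ / 2) * (Real.sin (φ / 2) *
      (28 - 36 * Real.sin (φ / 2) ^ 2 - 16 * Real.cos (φ / 2))) :=
    mul_pos (mul_pos hC hcγ) (mul_pos hq (by linarith [Real.cos_le_one (φ / 2)]))
  rw [show 3 * φ / 2 = 3 * (φ / 2) by ring, Real.sin_three_mul, Real.cos_three_mul]
  rw [hs] at hforce ⊢
  linarith
end

section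
/- Let γ ∈ (π/2, π] and C > 0 satisfy 2·C·cos(γ/2) + cos γ ≤ 0. Then the derivative of the dimensionless total force is nonnegative on [0, π/4] and vanishes there only at φ = 0: F′(φ) ≥ 0 for all φ ∈ [0, π/4], and F′(φ) > 0 for all φ ∈ (0, π/4]. -/
/-- The derivative of the total force, factored through the half angle `(φ + γ) / 2`. -/
theorem hasDerivAt_total_force (γ A C φ : ℝ) :
    HasDerivAt (fun φ => -A * C ^ 2 - 2 * Real.sin (φ + γ)
      - 4 * C * Real.cos ((φ + γ) / 2) * Real.sin φ
      - (1 / 2) * C ^ 2 * Real.sin (2 * φ) + C ^ 2 * φ)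
      (2 * (-Real.cos (φ + γ) + C * Real.sin φ * Real.sin ((φ + γ) / 2)
        - 2 * C * Real.cos φ * Real.cos ((φ + γ) / 2) + C ^ 2 * Real.sin φ ^ 2)) φ := by
  have hsum : HasDerivAt (fun φ : ℝ => φ + γ) 1 φ := (hasDerivAt_id φ).add_const γ
  have hdouble : HasDerivAt (fun φ : ℝ => 2 * φ) (2 * 1) φ := (hasDerivAt_id φ).const_mul 2
  have h := ((((hasDerivAt_const φ (-A * C ^ 2)).sub (hsum.sin.const_mul 2)).sub
    (((hsum.div_const 2).cos.const_mul (4 * C)).mul (Real.hasDerivAt_sin φ))).sub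
    (hdouble.sin.const_mul ((1 / 2) * C ^ 2))).add ((hasDerivAt_id φ).const_mul (C ^ 2))
  refine h.congr_deriv ?_
  rw [Real.cos_two_mul, Real.cos_sq']
  ring

/-- For obtuse `γ` the half-angle form of the derivative is positive on `(0, π/4]`. -/
theorem total_force_deriv_expr_pos {γ C φ : ℝ} (hγ : γ ∈ Set.Ioc (Real.pi / 2) Real.pi)
    (hC : 0 < C) (hcond : 2 * C * Real.cos (γ / 2) + Real.cos γ ≤ 0)
    (hφ : φ ∈ Set.Ioc (0 : ℝ) (Real.pi / 4)) :
    0 < -Real.cos (φ + γ) + C * Real.sin φ * Real.sin ((φ + γ) / 2)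
      - 2 * C * Real.cos φ * Real.cos ((φ + γ) / 2) + C ^ 2 * Real.sin φ ^ 2 := by
  obtain ⟨hγ₁, hγ₂⟩ := hγ
  obtain ⟨hφ₁, hφ₂⟩ := hφ
  have hπ := Real.pi_pos
  have hsinφ : 0 < Real.sin φ := Real.sin_pos_of_pos_of_lt_pi hφ₁ (by linarith)
  have hcosφ : 0 < Real.cos φ := Real.cos_pos_of_mem_Ioo ⟨by linarith, by linarith⟩
  have hsin : 0 < Real.sin ((φ + γ) / 2) :=
    Real.sin_pos_of_pos_of_lt_pi (by linarith) (by linarith)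
  have hsin_term : 0 < C * Real.sin φ * Real.sin ((φ + γ) / 2) := by positivity
  have hsq_term : 0 < C ^ 2 * Real.sin φ ^ 2 := by positivity
  rcases le_or_gt (Real.cos ((φ + γ) / 2)) 0 with hcos | hcos
  · have hneg : Real.cos (φ + γ) < 0 :=
      Real.cos_neg_of_pi_div_two_lt_of_lt (by linarith) (by linarith)
    have hcos_term : 2 * C * Real.cos φ * Real.cos ((φ + γ) / 2) ≤ 0 :=
      mul_nonpos_of_nonneg_of_nonpos (by positivity) hcos
    linarith
  · have hlt : Real.cos ((φ + γ) / 2) < Real.cos (γ / 2) :=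
      Real.cos_lt_cos_of_nonneg_of_le_pi (by linarith) (by linarith) (by linarith)
    have hcos_add : Real.cos (φ + γ) = 2 * Real.cos ((φ + γ) / 2) ^ 2 - 1 := by
      rw [← Real.cos_two_mul, mul_div_cancel₀ _ two_ne_zero]
    have hcos_γ : Real.cos γ = 2 * Real.cos (γ / 2) ^ 2 - 1 := by
      rw [← Real.cos_two_mul, mul_div_cancel₀ _ two_ne_zero]
    have hsq : Real.cos ((φ + γ) / 2) ^ 2 < Real.cos (γ / 2) ^ 2 := by gcongr
    have hcos_term : 2 * C * Real.cos φ * Real.cos ((φ + γ) / 2) ≤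
        2 * C * 1 * Real.cos (γ / 2) := by
      gcongr
      exact Real.cos_le_one φ
    linarith

/-- For `γ ∈ (π/2, π]` and `C > 0` with `2·C·cos(γ/2) + cos γ ≤ 0`, the derivative of the
dimensionless total force is nonnegative on `[0, π/4]` and vanishes there only at `φ = 0`. -/
theorem total_force_deriv_nonneg_obtuse (γ A C : ℝ)
    (hγ : γ ∈ Set.Ioc (Real.pi / 2) Real.pi) (hA : 0 < A) (hC : 0 < C)
    (hcond : 2 * C * Real.cos (γ / 2) + Real.cos γ ≤ 0)
    (F : ℝ → ℝ)
    (hF : F = fun φ => -A * C ^ 2 - 2 * Real.sin (φ + γ)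
      - 4 * C * Real.cos ((φ + γ) / 2) * Real.sin φ
      - (1 / 2) * C ^ 2 * Real.sin (2 * φ) + C ^ 2 * φ) :
    (∀ φ ∈ Set.Icc (0 : ℝ) (Real.pi / 4), 0 ≤ deriv F φ) ∧
    (∀ φ ∈ Set.Ioc (0 : ℝ) (Real.pi / 4), 0 < deriv F φ) := by
  have hderiv (φ : ℝ) := hF ▸ (hasDerivAt_total_force γ A C φ).deriv
  have hpos : ∀ φ ∈ Set.Ioc (0 : ℝ) (Real.pi / 4), 0 < deriv F φ := fun φ hφ => by
    rw [hderiv]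
    exact mul_pos two_pos (total_force_deriv_expr_pos hγ hC hcond hφ)
  refine ⟨fun φ hφ => ?_, hpos⟩
  rcases hφ.1.eq_or_lt with rfl | h
  · rw [hderiv]
    simp only [zero_add, Real.sin_zero, Real.cos_zero]
    linarith
  · exact (hpos φ ⟨h, hφ.2⟩).le
end

section
/- Let γ ∈ (π/2, π] and C > 0 satisfy 2·C·cos(γ/2) + cos γ > 0 (equivalently F′(0) < 0). Then the dimensionless total force F has exactly two critical points in (0, π): there exist φ₁ ∈ (0, π/4) and φ₂ ∈ (π/2, π) with F′(φ₁) = F′(φ₂) = 0, and F′(φ) < 0 for φ ∈ [0, φ₁), F′(φ) > 0 for φ ∈ (φ₁, φ₂), and F′(φ) < 0 for φ ∈ (φ₂, π]. -/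
open Real Set

/-- The first derivative of the dimensionless total force. -/
noncomputable def forceDeriv (γ C φ : ℝ) : ℝ :=
  -2 * cos (φ + γ) + 2 * C * sin ((φ + γ) / 2) * sin φ
    - 4 * C * cos ((φ + γ) / 2) * cos φ - C ^ 2 * cos (2 * φ) + C ^ 2

/-- The second derivative of the dimensionless total force. -/
noncomputable def forceDerivTwo (γ C φ : ℝ) : ℝ :=
  2 * sin (φ + γ) + 5 * C * cos ((φ + γ) / 2) * sin φ
    + 4 * C * sin ((φ + γ) / 2) * cos φ + 2 * C ^ 2 * sin (2 * φ)

lemma hasDerivAt_force (γ A C φ : ℝ) :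
    HasDerivAt (fun φ => -A * C ^ 2 - 2 * sin (φ + γ) - 4 * C * cos ((φ + γ) / 2) * sin φ
      - (1 / 2) * C ^ 2 * sin (2 * φ) + C ^ 2 * φ) (forceDeriv γ C φ) φ := by
  have h1 : HasDerivAt (fun φ : ℝ => φ + γ) 1 φ := (hasDerivAt_id φ).add_const γ
  have h2 : HasDerivAt (fun φ : ℝ => 2 * φ) (2 * 1) φ := (hasDerivAt_id φ).const_mul 2
  refine HasDerivAt.congr_deriv (((((h1.sin.const_mul 2).const_sub (-A * C ^ 2)).sub
    (((h1.div_const 2).cos.const_mul (4 * C)).mul (hasDerivAt_sin φ))).sub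
    (h2.sin.const_mul ((1 / 2) * C ^ 2))).add ((hasDerivAt_id φ).const_mul (C ^ 2))) ?_
  rw [forceDeriv]
  ring

lemma hasDerivAt_forceDeriv (γ C φ : ℝ) :
    HasDerivAt (forceDeriv γ C) (forceDerivTwo γ C φ) φ := by
  have h1 : HasDerivAt (fun φ : ℝ => φ + γ) 1 φ := (hasDerivAt_id φ).add_const γ
  have h2 : HasDerivAt (fun φ : ℝ => 2 * φ) (2 * 1) φ := (hasDerivAt_id φ).const_mul 2
  refine HasDerivAt.congr_deriv (((((h1.cos.const_mul (-2)).add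
    (((h1.div_const 2).sin.const_mul (2 * C)).mul (hasDerivAt_sin φ))).sub
    (((h1.div_const 2).cos.const_mul (4 * C)).mul (hasDerivAt_cos φ))).sub
    (h2.cos.const_mul (C ^ 2))).add_const (C ^ 2)) ?_
  rw [forceDerivTwo]
  ring

lemma continuous_forceDeriv (γ C : ℝ) : Continuous (forceDeriv γ C) :=
  continuous_iff_continuousAt.2 fun φ => (hasDerivAt_forceDeriv γ C φ).continuousAt

lemma lt_sqrt_two_div_two : (0.707 : ℝ) < √2 / 2 := by
  have : (1.414 : ℝ) < √2 := Real.lt_sqrt_of_sq_lt (by norm_num)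
  linarith

/-- For large angles the condition `F′(0) < 0` forces `C` to be bounded below. -/
lemma lt_of_cond {γ C : ℝ} (h₁ : 3 * π / 4 ≤ γ) (h₂ : γ ≤ π)
    (hcond : 0 < 2 * C * cos (γ / 2) + cos γ) : 0.85 < C := by
  have hcos : cos γ ≤ -(√2 / 2) := by
    have : cos (π - γ) ≥ cos (π / 4) :=
      cos_le_cos_of_nonneg_of_le_pi (by linarith) (by linarith [pi_pos]) (by linarith)
    rw [cos_pi_sub, cos_pi_div_four] at this
    linarith
  have hsq : cos γ = 2 * cos (γ / 2) ^ 2 - 1 := by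
    rw [← cos_two_mul]; congr 1; ring
  have hc0 : 0 ≤ cos (γ / 2) :=
    cos_nonneg_of_neg_pi_div_two_le_of_le (by linarith [pi_pos]) (by linarith)
  have hs := lt_sqrt_two_div_two
  have hc : cos (γ / 2) ≤ 0.39 := by nlinarith
  by_contra! hC
  nlinarith

lemma forceDerivTwo_pos {γ C φ : ℝ} (hγ : γ ∈ Ioc (π / 2) π) (hC : 0 < C)
    (hcond : 0 < 2 * C * cos (γ / 2) + cos γ) (hφ : φ ∈ Ioo 0 (π / 4)) :
    0 < forceDerivTwo γ C φ := by
  obtain ⟨hγ₁, hγ₂⟩ := hγ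
  obtain ⟨hφ₁, hφ₂⟩ := hφ
  have hsin : 0 < sin φ := sin_pos_of_pos_of_lt_pi hφ₁ (by linarith)
  have hcos : √2 / 2 ≤ cos φ := by
    rw [← cos_pi_div_four]
    exact cos_le_cos_of_nonneg_of_le_pi hφ₁.le (by linarith) hφ₂.le
  have hcos' : 0.707 < cos φ := lt_sqrt_two_div_two.trans_le hcos
  have hsin' : sin φ ≤ √2 / 2 := by
    rw [← sin_pi_div_four]
    exact sin_le_sin_of_le_of_le_pi_div_two (by linarith) (by linarith) hφ₂.le
  have hu : 0 < sin ((φ + γ) / 2) :=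
    sin_pos_of_pos_of_lt_pi (by linarith) (by linarith)
  rw [forceDerivTwo, sin_two_mul]
  rcases le_or_gt (φ + γ) π with h | h
  · have h1 : 0 ≤ sin (φ + γ) := sin_nonneg_of_nonneg_of_le_pi (by linarith) h
    have h2 : 0 ≤ cos ((φ + γ) / 2) :=
      cos_nonneg_of_neg_pi_div_two_le_of_le (by linarith) (by linarith)
    have h3 : 0 < cos φ := by linarith
    positivity
  · have hC' : 0.85 < C := lt_of_cond (by linarith) hγ₂ hcond
    have h1 : -sin φ ≤ sin (φ + γ) := by
      have : sin (φ + γ - π) ≤ sin φ :=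
        sin_le_sin_of_le_of_le_pi_div_two (by linarith) (by linarith) (by linarith)
      rw [sin_sub_pi] at this
      linarith
    have h2 : -(1 / 2) ≤ cos ((φ + γ) / 2) := by
      have : sin ((φ + γ) / 2 - π / 2) ≤ sin (π / 6) :=
        sin_le_sin_of_le_of_le_pi_div_two (by linarith) (by linarith) (by linarith)
      rw [sin_sub_pi_div_two, sin_pi_div_six] at this
      linarith
    have h2' : cos ((φ + γ) / 2) ≤ 0 :=
      cos_nonpos_of_pi_div_two_le_of_le (by linarith) (by linarith)
    have h3 : 0.8 < sin ((φ + γ) / 2) := by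
      nlinarith [sin_sq_add_cos_sq ((φ + γ) / 2)]
    have h4 : 0 < 5 * cos ((φ + γ) / 2) * sin φ + 4 * sin ((φ + γ) / 2) * cos φ := by
      nlinarith
    have h5 : 1 < 2 * (C ^ 2 * cos φ) := by nlinarith
    nlinarith [mul_pos hC h4, mul_pos hsin (sub_pos.2 h5)]

lemma forceDerivTwo_neg {γ C φ : ℝ} (hγ : γ ∈ Ioc (π / 2) π) (hC : 0 < C)
    (hφ : φ ∈ Ioo (π / 2) π) : forceDerivTwo γ C φ < 0 := by
  obtain ⟨hγ₁, hγ₂⟩ := hγ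
  obtain ⟨hφ₁, hφ₂⟩ := hφ
  have hsin : 0 < sin φ := sin_pos_of_pos_of_lt_pi (by linarith) hφ₂
  have hcos : cos φ < 0 := cos_neg_of_pi_div_two_lt_of_lt hφ₁ (by linarith)
  have hu : 0 < sin ((φ + γ) / 2) := sin_pos_of_pos_of_lt_pi (by linarith) (by linarith)
  have hv : cos ((φ + γ) / 2) < 0 :=
    cos_neg_of_pi_div_two_lt_of_lt (by linarith) (by linarith)
  have hsum : sin (φ + γ) = 2 * sin ((φ + γ) / 2) * cos ((φ + γ) / 2) := by
    rw [← sin_two_mul]; congr 1; ring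
  rw [forceDerivTwo, sin_two_mul, hsum]
  have h1 := mul_neg_of_pos_of_neg hu hv
  have h2 := mul_neg_of_pos_of_neg (mul_pos hC hsin) hv
  have h3 := mul_neg_of_pos_of_neg (mul_pos hC hu) hcos
  have h4 := mul_neg_of_pos_of_neg (mul_pos (pow_pos hC 2) hsin) hcos
  linarith

lemma forceDeriv_pos {γ C φ : ℝ} (hγ : γ ∈ Ioc (π / 2) π) (hC : 0 < C)
    (hφ : φ ∈ Icc (π / 4) (π / 2)) : 0 < forceDeriv γ C φ := by
  obtain ⟨hγ₁, hγ₂⟩ := hγ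
  obtain ⟨hφ₁, hφ₂⟩ := hφ
  have hs : √2 / 2 ≤ sin φ := by
    rw [← sin_pi_div_four]
    exact sin_le_sin_of_le_of_le_pi_div_two (by linarith) hφ₂ hφ₁
  have hc0 : 0 ≤ cos φ := cos_nonneg_of_neg_pi_div_two_le_of_le (by linarith) hφ₂
  have hc : cos φ ≤ √2 / 2 := by
    rw [← cos_pi_div_four]
    exact cos_le_cos_of_nonneg_of_le_pi (by linarith) (by linarith) hφ₁
  have hs0 : 0 < sin φ := (by positivity : 0 < √2 / 2).trans_le hs
  have hu : 0 < sin ((φ + γ) / 2) := sin_pos_of_pos_of_lt_pi (by linarith) (by linarith)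
  have h1 : cos (φ + γ) ≤ 0 := cos_nonpos_of_pi_div_two_le_of_le (by linarith) (by linarith)
  have h2 : 2 * cos ((φ + γ) / 2) < sin ((φ + γ) / 2) := by
    rcases le_or_gt (φ + γ) π with h | h
    · have h3 : cos (φ + γ) ≤ -(√2 / 2) := by
        have : cos (π / 4) ≤ cos (π - (φ + γ)) :=
          cos_le_cos_of_nonneg_of_le_pi (by linarith) (by linarith) (by linarith)
        rw [cos_pi_sub, cos_pi_div_four] at this
        linarith
      have h4 : cos (φ + γ) = 2 * cos ((φ + γ) / 2) ^ 2 - 1 := by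
        rw [← cos_two_mul]; congr 1; ring
      nlinarith [sin_sq_add_cos_sq ((φ + γ) / 2), lt_sqrt_two_div_two]
    · have : cos ((φ + γ) / 2) ≤ 0 :=
        cos_nonpos_of_pi_div_two_le_of_le (by linarith) (by linarith)
      linarith
  have h3 : 0 < sin ((φ + γ) / 2) * sin φ - 2 * cos ((φ + γ) / 2) * cos φ := by
    nlinarith [mul_nonneg hc0 (sub_pos.2 h2).le, mul_nonneg hu.le (sub_nonneg.2 (hc.trans hs)),
      mul_pos (sub_pos.2 h2) hs0]
  have h4 : C ^ 2 * cos (2 * φ) ≤ C ^ 2 :=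
    mul_le_of_le_one_right (sq_nonneg C) (cos_le_one _)
  rw [forceDeriv]
  nlinarith [mul_pos hC h3]

lemma forceDeriv_zero_neg {γ C : ℝ} (hcond : 0 < 2 * C * cos (γ / 2) + cos γ) :
    forceDeriv γ C 0 < 0 := by
  simp only [forceDeriv, zero_add, sin_zero, mul_zero, cos_zero, mul_one]
  linarith

lemma forceDeriv_pi_neg {γ C : ℝ} (hγ : γ ∈ Ioc (π / 2) π) (hC : 0 < C) :
    forceDeriv γ C π < 0 := by
  obtain ⟨hγ₁, hγ₂⟩ := hγ
  have h1 : cos γ < 0 := cos_neg_of_pi_div_two_lt_of_lt hγ₁ (by linarith [pi_pos])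
  have h2 : 0 < sin (γ / 2) := sin_pos_of_pos_of_lt_pi (by linarith [pi_pos]) (by linarith)
  have h3 : cos ((π + γ) / 2) = -sin (γ / 2) := by
    rw [← cos_add_pi_div_two]; congr 1; ring
  have h4 : cos (π + γ) = -cos γ := by rw [add_comm, cos_add_pi]
  rw [forceDeriv, h3, h4, sin_pi, cos_pi, cos_two_pi]
  linarith [mul_pos hC h2]

/-- For `γ ∈ (π/2, π]` and `C > 0` with `2·C·cos(γ/2) + cos γ > 0` (i.e. `F′(0) < 0`), the
dimensionless total force has exactly two critical points in `(0, π)`: one in `(0, π/4)` and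
one in `(π/2, π)`, with `F′ < 0` before the first, `F′ > 0` between them, `F′ < 0` after. -/
theorem total_force_two_critical_points_obtuse (γ A C : ℝ)
    (hγ : γ ∈ Set.Ioc (Real.pi / 2) Real.pi) (hA : 0 < A) (hC : 0 < C)
    (hcond : 0 < 2 * C * Real.cos (γ / 2) + Real.cos γ)
    (F : ℝ → ℝ)
    (hF : F = fun φ => -A * C ^ 2 - 2 * Real.sin (φ + γ)
      - 4 * C * Real.cos ((φ + γ) / 2) * Real.sin φ
      - (1 / 2) * C ^ 2 * Real.sin (2 * φ) + C ^ 2 * φ) :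
    ∃ φ₁ ∈ Set.Ioo (0 : ℝ) (Real.pi / 4), ∃ φ₂ ∈ Set.Ioo (Real.pi / 2) Real.pi,
      deriv F φ₁ = 0 ∧ deriv F φ₂ = 0 ∧
      (∀ φ ∈ Set.Ico (0 : ℝ) φ₁, deriv F φ < 0) ∧
      (∀ φ ∈ Set.Ioo φ₁ φ₂, 0 < deriv F φ) ∧
      (∀ φ ∈ Set.Ioc φ₂ Real.pi, deriv F φ < 0) := by
  have hderiv : deriv F = forceDeriv γ C := by
    rw [hF]
    exact funext fun φ => (hasDerivAt_force γ A C φ).deriv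
  rw [hderiv]
  have hpi := pi_pos
  have hcont := continuous_forceDeriv γ C
  have hmono : StrictMonoOn (forceDeriv γ C) (Icc 0 (π / 4)) := by
    refine strictMonoOn_of_deriv_pos (convex_Icc _ _) hcont.continuousOn fun φ hφ => ?_
    rw [interior_Icc] at hφ
    rw [(hasDerivAt_forceDeriv γ C φ).deriv]
    exact forceDerivTwo_pos hγ hC hcond hφ
  have hanti : StrictAntiOn (forceDeriv γ C) (Icc (π / 2) π) := by
    refine strictAntiOn_of_deriv_neg (convex_Icc _ _) hcont.continuousOn fun φ hφ => ?_
    rw [interior_Icc] at hφ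
    rw [(hasDerivAt_forceDeriv γ C φ).deriv]
    exact forceDerivTwo_neg hγ hC hφ
  obtain ⟨φ₁, hφ₁, hz₁⟩ := intermediate_value_Ioo (by linarith : (0 : ℝ) ≤ π / 4)
    hcont.continuousOn
    ⟨forceDeriv_zero_neg hcond, forceDeriv_pos hγ hC ⟨le_rfl, by linarith⟩⟩
  obtain ⟨φ₂, hφ₂, hz₂⟩ := intermediate_value_Ioo' (by linarith : π / 2 ≤ π)
    hcont.continuousOn
    ⟨forceDeriv_pi_neg hγ hC, forceDeriv_pos hγ hC ⟨by linarith, le_rfl⟩⟩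
  refine ⟨φ₁, hφ₁, φ₂, hφ₂, hz₁, hz₂, fun φ hφ => ?_, fun φ hφ => ?_, fun φ hφ => ?_⟩
  · rw [← hz₁]
    exact hmono ⟨hφ.1, (hφ.2.trans hφ₁.2).le⟩ (Ioo_subset_Icc_self hφ₁) hφ.2
  · rcases le_or_gt φ (π / 4) with h | h
    · rw [← hz₁]
      exact hmono (Ioo_subset_Icc_self hφ₁) ⟨(hφ₁.1.trans hφ.1).le, h⟩ hφ.1
    rcases le_or_gt φ (π / 2) with h' | h'
    · exact forceDeriv_pos hγ hC ⟨h.le, h'⟩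
    · rw [← hz₂]
      exact hanti ⟨h'.le, (hφ.2.trans hφ₂.2).le⟩ (Ioo_subset_Icc_self hφ₂) hφ.2
  · rw [← hz₂]
    exact hanti (Ioo_subset_Icc_self hφ₂) ⟨(hφ₂.1.trans hφ.1).le, hφ.2⟩ hφ.1
end

section
/- For any contact angle γ ∈ (π/2, π] and any A > 0, C > 0, the dimensionless total force F has at most two zeros on [0, π]: the set {φ ∈ [0, π] : F(φ) = 0} has at most two elements. -/
/-- A set in a linear order without three increasing elements has at most two elements. -/
theorem Set.encard_le_two_of_no_three_lt {α : Type*} [LinearOrder α] {s : Set α}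
    (h : ∀ x ∈ s, ∀ y ∈ s, ∀ z ∈ s, x < y → y < z → False) : s.encard ≤ 2 := by
  by_contra! hs
  obtain ⟨t, hts, ht⟩ := Set.exists_subset_encard_eq (Order.add_one_le_of_lt hs)
  obtain ⟨x, y, z, hxy, hxz, hyz, rfl⟩ := Set.encard_eq_three.mp (ht.trans (by norm_num))
  have hx : x ∈ s := hts (by simp)
  have hy : y ∈ s := hts (by simp)
  have hz : z ∈ s := hts (by simp)
  rcases lt_or_gt_of_ne hxy with h₁ | h₁ <;> rcases lt_or_gt_of_ne hxz with h₂ | h₂ <;>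
    rcases lt_or_gt_of_ne hyz with h₃ | h₃ <;> grind

/-- A function on `[o, c]` that is negative at `o`, convex on `[o, a]`, strictly increasing on
`[a, b]` and strictly concave on `[b, c]` has at most two zeros. -/
theorem encard_zeros_le_two_of_convexOn_strictMonoOn_strictConcaveOn {F : ℝ → ℝ} {o a b c : ℝ}
    (hoa : o ≤ a) (hab : a < b) (ho : F o < 0)
    (hconv : ConvexOn ℝ (Set.Icc o a) F) (hmono : StrictMonoOn F (Set.Icc a b))
    (hconc : StrictConcaveOn ℝ (Set.Icc b c) F) :
    Set.encard {x ∈ Set.Icc o c | F x = 0} ≤ 2 := by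
  have neg_of_convex : ∀ x y, o ≤ x → x < y → y ≤ a → F y ≤ 0 → F x < 0 := by
    intro x y hox hxy hya hy
    rcases hox.eq_or_lt with rfl | hox
    · exact ho
    by_contra! hx
    have := hconv.lt_right_of_left_lt (x := o) (y := y) (z := x) ⟨le_rfl, hoa⟩
      ⟨by linarith, hya⟩ (by rw [openSegment_eq_Ioo (hox.trans hxy)]; exact ⟨hox, hxy⟩)
      (by linarith)
    linarith
  have pos_of_concave : ∀ x y z, b ≤ x → x < y → y < z → z ≤ c → 0 ≤ F x → F z = 0 →
      0 < F y := by
    intro x y z hbx hxy hyz hzc hx hz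
    have := hconc.lt_on_openSegment (x := x) (y := z) (z := y) ⟨hbx, by linarith⟩
      ⟨by linarith, hzc⟩ (hxy.trans hyz).ne
      (by rw [openSegment_eq_Ioo (hxy.trans hyz)]; exact ⟨hxy, hyz⟩)
    rwa [hz, min_eq_right hx] at this
  refine Set.encard_le_two_of_no_three_lt ?_
  rintro x ⟨⟨hox, -⟩, hx⟩ y ⟨⟨-, -⟩, hy⟩ z ⟨⟨-, hzc⟩, hz⟩ hxy hyz
  rcases le_or_gt b x with hbx | hxb
  · exact (pos_of_concave x y z hbx hxy hyz hzc hx.ge hz).ne' hy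
  rcases le_or_gt y a with hya | hay
  · exact (neg_of_convex x y hox hxy hya hy.le).ne hx
  rcases le_or_gt a x with hax | hxa
  · have hFb : 0 < F b := hx ▸ hmono ⟨hax, hxb.le⟩ ⟨hab.le, le_rfl⟩ hxb
    rcases le_or_gt y b with hyb | hby
    · have := hmono ⟨hax, hxb.le⟩ ⟨hay.le, hyb⟩ hxy
      linarith
    · exact (pos_of_concave b y z le_rfl hby hyz hzc hFb.le hz).ne' hy
  · have hFa : 0 < F a := by
      by_contra! hFa
      exact (neg_of_convex x a hox hxa le_rfl hFa).ne hx
    rcases le_or_gt y b with hyb | hby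
    · have := hmono ⟨le_rfl, hab.le⟩ ⟨hay.le, hyb⟩ hay
      linarith
    · have hFb := hmono ⟨le_rfl, hab.le⟩ ⟨hab.le, le_rfl⟩ hab
      exact (pos_of_concave b y z le_rfl hby hyz hzc (by linarith) hz).ne' hy

/-- For any `γ ∈ (π/2, π]` and any `A, C > 0`, the dimensionless total force has at most two
zeros on `[0, π]`. -/
theorem total_force_at_most_two_zeros_obtuse (γ A C : ℝ)
    (hγ : γ ∈ Set.Ioc (Real.pi / 2) Real.pi) (hA : 0 < A) (hC : 0 < C)
    (F : ℝ → ℝ)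
    (hF : F = fun φ => -A * C ^ 2 - 2 * Real.sin (φ + γ)
      - 4 * C * Real.cos ((φ + γ) / 2) * Real.sin φ
      - (1 / 2) * C ^ 2 * Real.sin (2 * φ) + C ^ 2 * φ) :
    Set.encard {φ ∈ Set.Icc (0 : ℝ) Real.pi | F φ = 0} ≤ 2 := by
  obtain ⟨hγ₁, hγ₂⟩ := hγ
  have hπ := Real.pi_pos
  have hadd (φ : ℝ) : HasDerivAt (fun x : ℝ => x + γ) 1 φ := (hasDerivAt_id φ).add_const γ
  have hhalf (φ : ℝ) : HasDerivAt (fun x : ℝ => (x + γ) / 2) (1 / 2) φ := (hadd φ).div_const 2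
  have hdouble (φ : ℝ) : HasDerivAt (fun x : ℝ => 2 * x) 2 φ := by
    simpa using (hasDerivAt_id φ).const_mul 2
  have hderiv : deriv F = fun φ => 2 * C ^ 2 * Real.sin φ ^ 2
      + 2 * C * Real.sin ((φ + γ) / 2) * Real.sin φ
      - 4 * C * Real.cos ((φ + γ) / 2) * Real.cos φ - 2 * Real.cos (φ + γ) := by
    funext φ
    have h := ((((((hadd φ).sin.const_mul 2).const_sub (-A * C ^ 2)).sub
      (((hhalf φ).cos.const_mul (4 * C)).mul (Real.hasDerivAt_sin φ))).sub
      ((hdouble φ).sin.const_mul ((1 / 2) * C ^ 2))).add ((hasDerivAt_id φ).const_mul (C ^ 2)))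
    rw [hF]
    refine h.deriv.trans ?_
    rw [Real.cos_two_mul, Real.cos_sq']
    ring
  have hderiv₂ : deriv^[2] F = fun φ => 2 * Real.sin (φ + γ)
      + 5 * C * (Real.cos ((φ + γ) / 2) * Real.sin φ)
      + 4 * C * (Real.sin ((φ + γ) / 2) * Real.cos φ)
      + 4 * C ^ 2 * (Real.sin φ * Real.cos φ) := by
    funext φ
    have h := (((((Real.hasDerivAt_sin φ).pow 2).const_mul (2 * C ^ 2)).add
      (((hhalf φ).sin.const_mul (2 * C)).mul (Real.hasDerivAt_sin φ))).sub
      (((hhalf φ).cos.const_mul (4 * C)).mul (Real.hasDerivAt_cos φ))).sub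
      ((hadd φ).cos.const_mul 2)
    rw [Function.iterate_succ, Function.iterate_one, Function.comp_apply, hderiv]
    refine h.deriv.trans ?_
    push_cast
    ring
  have hdiff : Differentiable ℝ F := by rw [hF]; fun_prop
  have hdiff' : Differentiable ℝ (deriv F) := by rw [hderiv]; fun_prop
  refine encard_zeros_le_two_of_convexOn_strictMonoOn_strictConcaveOn
    (a := Real.pi - γ) (b := Real.pi / 2) (by linarith) (by linarith) ?_ ?_ ?_ ?_
  · have hsin := Real.sin_nonneg_of_nonneg_of_le_pi (x := γ) (by linarith) hγ₂
    have : 0 < A * C ^ 2 := by positivity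
    simp only [hF, zero_add, Real.sin_zero, mul_zero]
    linarith
  · refine convexOn_of_deriv2_nonneg (convex_Icc _ _) hdiff.continuous.continuousOn
      hdiff.differentiableOn hdiff'.differentiableOn fun φ hφ => ?_
    rw [interior_Icc] at hφ
    obtain ⟨h₁, h₂⟩ := hφ
    have hsin := Real.sin_nonneg_of_nonneg_of_le_pi (x := φ) (by linarith) (by linarith)
    have hcos := Real.cos_nonneg_of_neg_pi_div_two_le_of_le (x := φ) (by linarith) (by linarith)
    have hsin₂ := Real.sin_nonneg_of_nonneg_of_le_pi (x := (φ + γ) / 2) (by linarith) (by linarith)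
    have hcos₂ := Real.cos_nonneg_of_neg_pi_div_two_le_of_le (x := (φ + γ) / 2)
      (by linarith) (by linarith)
    have hsin₃ := Real.sin_nonneg_of_nonneg_of_le_pi (x := φ + γ) (by linarith) (by linarith)
    rw [hderiv₂]
    positivity
  · refine strictMonoOn_of_deriv_pos (convex_Icc _ _) hdiff.continuous.continuousOn fun φ hφ => ?_
    rw [interior_Icc] at hφ
    obtain ⟨h₁, h₂⟩ := hφ
    have hsin := Real.sin_pos_of_pos_of_lt_pi (x := φ) (by linarith) (by linarith)
    have hcos := Real.cos_nonneg_of_neg_pi_div_two_le_of_le (x := φ) (by linarith) (by linarith)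
    have hsin₂ := Real.sin_nonneg_of_nonneg_of_le_pi (x := (φ + γ) / 2) (by linarith) (by linarith)
    have hcos₂ := Real.cos_nonpos_of_pi_div_two_le_of_le (x := (φ + γ) / 2)
      (by linarith) (by linarith)
    have hcos₃ := Real.cos_nonpos_of_pi_div_two_le_of_le (x := φ + γ) (by linarith) (by linarith)
    have t₁ : 0 < 2 * C ^ 2 * Real.sin φ ^ 2 := by positivity
    have t₂ : 0 ≤ 2 * C * Real.sin ((φ + γ) / 2) * Real.sin φ := by positivity
    have t₃ : 4 * C * Real.cos ((φ + γ) / 2) * Real.cos φ ≤ 0 :=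
      mul_nonpos_of_nonpos_of_nonneg (mul_nonpos_of_nonneg_of_nonpos (by positivity) hcos₂) hcos
    rw [hderiv]
    linarith
  · refine strictConcaveOn_of_deriv2_neg (convex_Icc _ _) hdiff.continuous.continuousOn
      fun φ hφ => ?_
    rw [interior_Icc] at hφ
    obtain ⟨h₁, h₂⟩ := hφ
    have hsin := Real.sin_pos_of_pos_of_lt_pi (x := φ) (by linarith) (by linarith)
    have hcos := Real.cos_neg_of_pi_div_two_lt_of_lt (x := φ) (by linarith) (by linarith)
    have hsin₂ := Real.sin_nonneg_of_nonneg_of_le_pi (x := (φ + γ) / 2) (by linarith) (by linarith)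
    have hcos₂ := Real.cos_nonpos_of_pi_div_two_le_of_le (x := (φ + γ) / 2)
      (by linarith) (by linarith)
    have hsin₃ : Real.sin (φ + γ) ≤ 0 := by
      rw [← Real.sin_sub_two_pi]
      exact Real.sin_nonpos_of_nonpos_of_neg_pi_le (by linarith) (by linarith)
    have t₁ := mul_nonpos_of_nonneg_of_nonpos (a := 5 * C) (by positivity)
      (mul_nonpos_of_nonpos_of_nonneg hcos₂ hsin.le)
    have t₂ := mul_nonpos_of_nonneg_of_nonpos (a := 4 * C) (by positivity)
      (mul_nonpos_of_nonneg_of_nonpos hsin₂ hcos.le)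
    have t₃ := mul_neg_of_pos_of_neg (a := 4 * C ^ 2) (by positivity)
      (mul_neg_of_pos_of_neg hsin hcos)
    rw [hderiv₂]
    linarith
end

section
/- Let γ ∈ [0, π/2) and C > 0. Then for every φ ∈ [0, π/2], the second derivative of the dimensionless total force is nonnegative: F″(φ) = (C/2)·(cos(γ/2)·sin(φ/2) − sin(γ/2)·cos(φ/2) + 9·cos(γ/2)·sin(3φ/2) + 9·sin(γ/2)·cos(3φ/2)) + 2·C²·sin(2φ) + 2·sin(φ + γ) ≥ 0, and equality holds only when φ = 0 and γ = 0. -/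
open Real in
/-- Closed form of the second derivative of the total force, for all parameters and all `φ`. -/
lemma deriv_deriv_total_force (γ A C φ : ℝ) :
    deriv (deriv fun φ => -A * C ^ 2 - 2 * sin (φ + γ) - 4 * C * cos ((φ + γ) / 2) * sin φ
      - (1 / 2) * C ^ 2 * sin (2 * φ) + C ^ 2 * φ) φ =
      (C / 2) * (sin ((φ - γ) / 2) + 9 * sin ((3 * φ + γ) / 2))
        + 2 * C ^ 2 * sin (2 * φ) + 2 * sin (φ + γ) := by
  have product_to_sum : (fun φ => -A * C ^ 2 - 2 * sin (φ + γ)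
      - 4 * C * cos ((φ + γ) / 2) * sin φ - (1 / 2) * C ^ 2 * sin (2 * φ) + C ^ 2 * φ) =
      fun φ => -A * C ^ 2 - 2 * sin (φ + γ)
        - 2 * C * (sin ((3 * φ + γ) / 2) + sin ((φ - γ) / 2))
        - (1 / 2) * C ^ 2 * sin (2 * φ) + C ^ 2 * φ := by
    funext x
    rw [show (3 * x + γ) / 2 = x + (x + γ) / 2 by ring,
      show (x - γ) / 2 = x - (x + γ) / 2 by ring, sin_add x ((x + γ) / 2), sin_sub]
    ring
  have affine (a b x : ℝ) : HasDerivAt (fun y => a * y + b) a x := by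
    simpa using ((hasDerivAt_id x).const_mul a).add_const b
  have hsum (x : ℝ) : HasDerivAt (fun y => y + γ) 1 x := (hasDerivAt_id x).add_const γ
  have hthree (x : ℝ) : HasDerivAt (fun y => (3 * y + γ) / 2) (3 / 2) x :=
    (affine 3 γ x).div_const 2
  have hdiff (x : ℝ) : HasDerivAt (fun y => (y - γ) / 2) (1 / 2) x :=
    ((hasDerivAt_id x).sub_const γ).div_const 2
  have htwo (x : ℝ) : HasDerivAt (fun y => 2 * y) 2 x := by simpa using affine 2 0 x
  have first_deriv : deriv (fun φ => -A * C ^ 2 - 2 * sin (φ + γ)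
        - 2 * C * (sin ((3 * φ + γ) / 2) + sin ((φ - γ) / 2))
        - (1 / 2) * C ^ 2 * sin (2 * φ) + C ^ 2 * φ) =
      fun φ => -2 * cos (φ + γ)
        - C * (3 * cos ((3 * φ + γ) / 2) + cos ((φ - γ) / 2))
        - C ^ 2 * cos (2 * φ) + C ^ 2 := by
    funext x
    refine HasDerivAt.deriv (HasDerivAt.congr_deriv ((((((hsum x).sin.const_mul 2).const_sub (-A * C ^ 2)).sub
      (((hthree x).sin.add (hdiff x).sin).const_mul (2 * C))).sub
      ((htwo x).sin.const_mul ((1 / 2) * C ^ 2))).add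
      ((hasDerivAt_id x).const_mul (C ^ 2))) ?_)
    ring
  rw [product_to_sum, first_deriv]
  refine HasDerivAt.deriv (HasDerivAt.congr_deriv (((((hsum φ).cos.const_mul (-2)).sub
    ((((hthree φ).cos.const_mul 3).add (hdiff φ).cos).const_mul C)).sub
    ((htwo φ).cos.const_mul (C ^ 2))).add_const (C ^ 2)) ?_)
  ring

open Real in
lemma sin_half_sub_add_nine_sin_nonneg {φ γ : ℝ} (hφ : φ ∈ Set.Icc 0 (π / 2))
    (hγ : γ ∈ Set.Icc 0 (π / 2)) :
    0 ≤ sin ((φ - γ) / 2) + 9 * sin ((3 * φ + γ) / 2) := by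
  obtain ⟨hφ0, hφ1⟩ := hφ
  obtain ⟨hγ0, hγ1⟩ := hγ
  have sum_to_product : sin ((φ - γ) / 2) + sin ((3 * φ + γ) / 2) =
      2 * (sin φ * cos ((φ + γ) / 2)) := by
    rw [show (3 * φ + γ) / 2 = φ + (φ + γ) / 2 by ring,
      show (φ - γ) / 2 = φ - (φ + γ) / 2 by ring, sin_add φ, sin_sub]
    ring
  have hsin : 0 ≤ sin ((3 * φ + γ) / 2) :=
    sin_nonneg_of_nonneg_of_le_pi (by linarith) (by linarith)
  have hprod : 0 ≤ sin φ * cos ((φ + γ) / 2) :=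
    mul_nonneg (sin_nonneg_of_nonneg_of_le_pi hφ0 (by linarith))
      (cos_nonneg_of_neg_pi_div_two_le_of_le (by linarith) (by linarith))
  linarith

/-- For `γ ∈ [0, π/2)` and `C > 0`, the second derivative of the dimensionless total force is
nonnegative on `[0, π/2]`, with equality only when `φ = 0` and `γ = 0`. -/
theorem total_force_second_deriv_nonneg_acute (γ A C : ℝ)
    (hγ : γ ∈ Set.Ico (0 : ℝ) (Real.pi / 2)) (hA : 0 < A) (hC : 0 < C)
    (F : ℝ → ℝ)
    (hF : F = fun φ => -A * C ^ 2 - 2 * Real.sin (φ + γ)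
      - 4 * C * Real.cos ((φ + γ) / 2) * Real.sin φ
      - (1 / 2) * C ^ 2 * Real.sin (2 * φ) + C ^ 2 * φ) :
    ∀ φ ∈ Set.Icc (0 : ℝ) (Real.pi / 2),
      deriv (deriv F) φ =
        (C / 2) * (Real.cos (γ / 2) * Real.sin (φ / 2) - Real.sin (γ / 2) * Real.cos (φ / 2)
          + 9 * Real.cos (γ / 2) * Real.sin (3 * φ / 2)
          + 9 * Real.sin (γ / 2) * Real.cos (3 * φ / 2))
        + 2 * C ^ 2 * Real.sin (2 * φ) + 2 * Real.sin (φ + γ) ∧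
      0 ≤ (C / 2) * (Real.cos (γ / 2) * Real.sin (φ / 2) - Real.sin (γ / 2) * Real.cos (φ / 2)
          + 9 * Real.cos (γ / 2) * Real.sin (3 * φ / 2)
          + 9 * Real.sin (γ / 2) * Real.cos (3 * φ / 2))
        + 2 * C ^ 2 * Real.sin (2 * φ) + 2 * Real.sin (φ + γ) ∧
      ((C / 2) * (Real.cos (γ / 2) * Real.sin (φ / 2) - Real.sin (γ / 2) * Real.cos (φ / 2)
          + 9 * Real.cos (γ / 2) * Real.sin (3 * φ / 2)
          + 9 * Real.sin (γ / 2) * Real.cos (3 * φ / 2))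
        + 2 * C ^ 2 * Real.sin (2 * φ) + 2 * Real.sin (φ + γ) = 0 → φ = 0 ∧ γ = 0) := by
  intro φ hφ
  have bracket : Real.cos (γ / 2) * Real.sin (φ / 2) - Real.sin (γ / 2) * Real.cos (φ / 2)
      + 9 * Real.cos (γ / 2) * Real.sin (3 * φ / 2)
      + 9 * Real.sin (γ / 2) * Real.cos (3 * φ / 2) =
      Real.sin ((φ - γ) / 2) + 9 * Real.sin ((3 * φ + γ) / 2) := by
    rw [sub_div, add_div, Real.sin_sub, Real.sin_add]
    ring
  rw [bracket]
  have hbracket := mul_nonneg (half_pos hC).le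
    (sin_half_sub_add_nine_sin_nonneg hφ (Set.Ico_subset_Icc_self hγ))
  obtain ⟨hφ0, hφ1⟩ := hφ
  obtain ⟨hγ0, hγ1⟩ := hγ
  have hdouble : 0 ≤ 2 * C ^ 2 * Real.sin (2 * φ) :=
    mul_nonneg (by positivity)
      (Real.sin_nonneg_of_nonneg_of_le_pi (by linarith) (by linarith))
  have hsum : 0 ≤ Real.sin (φ + γ) :=
    Real.sin_nonneg_of_nonneg_of_le_pi (by linarith) (by linarith)
  refine ⟨by rw [hF, deriv_deriv_total_force], by linarith, fun hzero => ?_⟩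
  have hnonpos : φ + γ ≤ 0 := by
    by_contra! hpos
    have := Real.sin_pos_of_pos_of_lt_pi hpos (by linarith)
    linarith
  constructor <;> linarith
end

section
/- Let γ ∈ [0, π/2) and A > 0, C > 0. If F′(π) = −4·C·sin(γ/2) + 2·cos γ ≥ 0, then the dimensionless total force F has at most one zero on [0, π]; if F′(π) < 0, then F has at most two zeros on [0, π]. -/
open Real Set

/-- The dimensionless total force. -/
noncomputable def totalForce (γ A C φ : ℝ) : ℝ :=
  -A * C ^ 2 - 2 * sin (φ + γ) - 4 * C * cos ((φ + γ) / 2) * sin φ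
    - (1 / 2) * C ^ 2 * sin (2 * φ) + C ^ 2 * φ

/-- The derivative of the dimensionless total force. -/
noncomputable def totalForceDeriv (γ C φ : ℝ) : ℝ :=
  -2 * cos (φ + γ) + 2 * C * (sin ((φ + γ) / 2) * sin φ)
    - 4 * C * (cos ((φ + γ) / 2) * cos φ) + 2 * C ^ 2 * sin φ ^ 2

theorem hasDerivAt_totalForce_s15 (γ A C φ : ℝ) :
    HasDerivAt (totalForce γ A C) (totalForceDeriv γ C φ) φ := by
  have h1 : HasDerivAt (fun x : ℝ => x + γ) 1 φ := (hasDerivAt_id φ).add_const γ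
  have h2 : HasDerivAt (fun x : ℝ => 2 * x) (2 * 1) φ := (hasDerivAt_id φ).const_mul 2
  have h := ((((h1.sin.const_mul 2).const_sub (-A * C ^ 2)).sub
    (((h1.div_const 2).cos.const_mul (4 * C)).mul (hasDerivAt_sin φ))).sub
    (h2.sin.const_mul ((1 / 2) * C ^ 2))).add ((hasDerivAt_id φ).const_mul (C ^ 2))
  refine HasDerivAt.congr_deriv (f := totalForce γ A C) h ?_
  simp only [totalForceDeriv, cos_two_mul, sin_sq]
  ring

theorem continuous_totalForce (γ A C : ℝ) : Continuous (totalForce γ A C) :=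
  continuous_iff_continuousAt.2 fun φ => (hasDerivAt_totalForce_s15 γ A C φ).continuousAt

theorem deriv_totalForce (γ A C : ℝ) : deriv (totalForce γ A C) = totalForceDeriv γ C :=
  funext fun φ => (hasDerivAt_totalForce_s15 γ A C φ).deriv

theorem totalForceDeriv_pi (γ C : ℝ) :
    totalForceDeriv γ C π = -4 * C * sin (γ / 2) + 2 * cos γ := by
  have h : cos ((π + γ) / 2) = -sin (γ / 2) := by
    rw [← cos_add_pi_div_two]; ring_nf
  rw [totalForceDeriv, h, add_comm π γ, cos_add_pi, sin_pi, cos_pi]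
  ring

theorem totalForce_zero_neg {γ A C : ℝ} (hγ : γ ∈ Ico 0 (π / 2)) (hA : 0 < A) (hC : 0 < C) :
    totalForce γ A C 0 < 0 := by
  have h : 0 ≤ sin γ := sin_nonneg_of_nonneg_of_le_pi hγ.1 (by linarith [hγ.2, pi_pos])
  have h' : 0 < A * C ^ 2 := by positivity
  simp only [totalForce, zero_add, mul_zero, sin_zero]
  linarith

theorem monotoneOn_totalForceDeriv {γ C : ℝ} (hγ : γ ∈ Ico 0 (π / 2)) (hC : 0 < C) :
    MonotoneOn (totalForceDeriv γ C) (Icc 0 (π / 2)) := by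
  intro x hx y hy hxy
  obtain ⟨hγ0, hγ1⟩ := hγ
  obtain ⟨hx0, hx1⟩ := hx
  obtain ⟨hy0, hy1⟩ := hy
  have h1 : cos (y + γ) ≤ cos (x + γ) :=
    cos_le_cos_of_nonneg_of_le_pi (by linarith) (by linarith) (by linarith)
  have h2 : sin ((x + γ) / 2) ≤ sin ((y + γ) / 2) :=
    sin_le_sin_of_le_of_le_pi_div_two (by linarith) (by linarith) (by linarith)
  have h3 : sin x ≤ sin y := sin_le_sin_of_le_of_le_pi_div_two (by linarith) hy1 hxy
  have h4 : cos ((y + γ) / 2) ≤ cos ((x + γ) / 2) :=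
    cos_le_cos_of_nonneg_of_le_pi (by linarith) (by linarith) (by linarith)
  have h5 : cos y ≤ cos x := cos_le_cos_of_nonneg_of_le_pi hx0 (by linarith) hxy
  have p1 : 0 ≤ sin x := sin_nonneg_of_nonneg_of_le_pi hx0 (by linarith)
  have p2 : 0 ≤ sin ((x + γ) / 2) :=
    sin_nonneg_of_nonneg_of_le_pi (by linarith) (by linarith)
  have p3 : 0 ≤ cos y := cos_nonneg_of_neg_pi_div_two_le_of_le (by linarith) hy1
  have p4 : 0 ≤ cos ((y + γ) / 2) :=
    cos_nonneg_of_neg_pi_div_two_le_of_le (by linarith) (by linarith)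
  have q1 : 2 * C * (sin ((x + γ) / 2) * sin x) ≤ 2 * C * (sin ((y + γ) / 2) * sin y) := by
    gcongr
    exact p2.trans h2
  have q2 : 4 * C * (cos ((y + γ) / 2) * cos y) ≤ 4 * C * (cos ((x + γ) / 2) * cos x) := by
    gcongr
    exact p4.trans h4
  have q3 : 2 * C ^ 2 * sin x ^ 2 ≤ 2 * C ^ 2 * sin y ^ 2 := by gcongr
  simp only [totalForceDeriv]
  linarith

theorem convexOn_totalForce {γ C : ℝ} (A : ℝ) (hγ : γ ∈ Ico 0 (π / 2)) (hC : 0 < C) :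
    ConvexOn ℝ (Icc 0 (π / 2)) (totalForce γ A C) := by
  refine MonotoneOn.convexOn_of_deriv (convex_Icc _ _) (continuous_totalForce γ A C).continuousOn
    (fun φ _ => (hasDerivAt_totalForce_s15 γ A C φ).differentiableAt.differentiableWithinAt) ?_
  rw [deriv_totalForce]
  exact (monotoneOn_totalForceDeriv hγ hC).mono interior_subset

/-- On the first quarter period the total force is positive after a zero. -/
theorem totalForce_pos_of_zero_lt {γ A C a b : ℝ} (hγ : γ ∈ Ico 0 (π / 2)) (hA : 0 < A)
    (hC : 0 < C) (ha : 0 ≤ a) (hab : a < b) (hb : b ≤ π / 2) (h : totalForce γ A C a = 0) :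
    0 < totalForce γ A C b := by
  have hb0 : 0 < b := ha.trans_lt hab
  have hconv := (convexOn_totalForce A hγ hC).2 (left_mem_Icc.2 (by positivity)) ⟨hb0.le, hb⟩
    (sub_nonneg.2 ((div_le_one hb0).2 hab.le)) (by positivity) (sub_add_cancel 1 (a / b))
  have hlt : a / b < 1 := (div_lt_one hb0).2 hab
  have hnn : 0 ≤ a / b := by positivity
  have h0 := totalForce_zero_neg hγ hA hC
  simp only [smul_eq_mul, mul_zero, zero_add, div_mul_cancel₀ a hb0.ne', h] at hconv
  by_contra! hle
  nlinarith [mul_pos (sub_pos.2 hlt) (neg_pos.2 h0), mul_nonneg hnn (neg_nonneg.2 hle)]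

theorem totalForceDeriv_pos {γ C u : ℝ} (hγ : γ ∈ Ico 0 (π / 2)) (hC : 0 < C)
    (hu : π / 2 ≤ u) (hu' : u < π) (huγ : u ≤ π - γ) : 0 < totalForceDeriv γ C u := by
  obtain ⟨hγ0, hγ1⟩ := hγ
  have h1 : cos (u + γ) ≤ 0 := cos_nonpos_of_pi_div_two_le_of_le (by linarith) (by linarith)
  have h2 : 0 ≤ sin ((u + γ) / 2) :=
    sin_nonneg_of_nonneg_of_le_pi (by linarith) (by linarith)
  have h3 : 0 < sin u := sin_pos_of_pos_of_lt_pi (by linarith) hu'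
  have h4 : 0 ≤ cos ((u + γ) / 2) :=
    cos_nonneg_of_neg_pi_div_two_le_of_le (by linarith) (by linarith)
  have h5 : cos u ≤ 0 := cos_nonpos_of_pi_div_two_le_of_le hu (by linarith)
  have q1 : 0 ≤ 2 * C * (sin ((u + γ) / 2) * sin u) := by positivity
  have q2 : 4 * C * (cos ((u + γ) / 2) * cos u) ≤ 0 :=
    mul_nonpos_of_nonneg_of_nonpos (by positivity) (mul_nonpos_of_nonneg_of_nonpos h4 h5)
  have q3 : 0 < 2 * C ^ 2 * sin u ^ 2 := by positivity
  simp only [totalForceDeriv]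
  linarith

theorem strictAntiOn_totalForceDeriv {γ C : ℝ} (hγ : γ ∈ Ico 0 (π / 2)) (hC : 0 < C) :
    StrictAntiOn (totalForceDeriv γ C) (Icc (π - γ) π) := by
  intro x hx y hy hxy
  obtain ⟨hγ0, hγ1⟩ := hγ
  obtain ⟨hx0, hx1⟩ := hx
  obtain ⟨hy0, hy1⟩ := hy
  have h1 : cos (x + γ) ≤ cos (y + γ) := by
    have := cos_le_cos_of_nonneg_of_le_pi (x := x + γ - π) (y := y + γ - π)
      (by linarith) (by linarith) (by linarith)
    rw [cos_sub_pi, cos_sub_pi] at this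
    linarith
  have h2 : sin ((y + γ) / 2) ≤ sin ((x + γ) / 2) := by
    rw [← sin_pi_sub ((y + γ) / 2), ← sin_pi_sub ((x + γ) / 2)]
    exact sin_le_sin_of_le_of_le_pi_div_two (by linarith) (by linarith) (by linarith)
  have h3 : sin y < sin x := by
    rw [← sin_pi_sub y, ← sin_pi_sub x]
    exact sin_lt_sin_of_lt_of_le_pi_div_two (by linarith) (by linarith) (by linarith)
  have h4 : cos ((y + γ) / 2) ≤ cos ((x + γ) / 2) :=
    cos_le_cos_of_nonneg_of_le_pi (by linarith) (by linarith) (by linarith)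
  have h5 : cos y ≤ cos x := cos_le_cos_of_nonneg_of_le_pi (by linarith) hy1 hxy.le
  have p1 : 0 ≤ sin y := sin_nonneg_of_nonneg_of_le_pi (by linarith) hy1
  have p2 : 0 ≤ sin ((y + γ) / 2) :=
    sin_nonneg_of_nonneg_of_le_pi (by linarith) (by linarith)
  have p3 : cos x ≤ 0 := cos_nonpos_of_pi_div_two_le_of_le (by linarith) (by linarith)
  have p4 : cos ((x + γ) / 2) ≤ 0 :=
    cos_nonpos_of_pi_div_two_le_of_le (by linarith) (by linarith)
  have q1 : 2 * C * (sin ((y + γ) / 2) * sin y) ≤ 2 * C * (sin ((x + γ) / 2) * sin x) := by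
    gcongr
    exact p2.trans h2
  have q2 : 4 * C * (cos ((x + γ) / 2) * cos x) ≤ 4 * C * (cos ((y + γ) / 2) * cos y) :=
    mul_le_mul_of_nonneg_left (mul_le_mul_of_nonpos_of_nonpos h4 h5 (h4.trans p4) p3)
      (by positivity)
  have q3 : 2 * C ^ 2 * sin y ^ 2 < 2 * C ^ 2 * sin x ^ 2 := by gcongr
  simp only [totalForceDeriv]
  linarith

/-- On `[π / 2, π]` the derivative is positive before any point where it is nonnegative. -/
theorem totalForceDeriv_pos_of_lt {γ C u v : ℝ} (hγ : γ ∈ Ico 0 (π / 2)) (hC : 0 < C)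
    (hu : π / 2 ≤ u) (huv : u < v) (hv : v ≤ π) (h : 0 ≤ totalForceDeriv γ C v) :
    0 < totalForceDeriv γ C u := by
  rcases le_total u (π - γ) with huγ | huγ
  · exact totalForceDeriv_pos hγ hC hu (huv.trans_le hv) huγ
  · exact h.trans_lt (strictAntiOn_totalForceDeriv hγ hC ⟨huγ, by linarith⟩
      ⟨by linarith, hv⟩ huv)

theorem strictMonoOn_totalForce {γ C v : ℝ} (A : ℝ) (hγ : γ ∈ Ico 0 (π / 2)) (hC : 0 < C)
    (hv : v ≤ π) (h : 0 ≤ totalForceDeriv γ C v) :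
    StrictMonoOn (totalForce γ A C) (Icc (π / 2) v) := by
  refine strictMonoOn_of_deriv_pos (convex_Icc _ _) (continuous_totalForce γ A C).continuousOn ?_
  intro u hu
  rw [interior_Icc] at hu
  rw [deriv_totalForce]
  exact totalForceDeriv_pos_of_lt hγ hC hu.1.le hu.2 hv h

theorem strictAntiOn_totalForce {γ C v : ℝ} (A : ℝ) (hγ : γ ∈ Ico 0 (π / 2)) (hC : 0 < C)
    (hv : π / 2 ≤ v) (h : totalForceDeriv γ C v < 0) :
    StrictAntiOn (totalForce γ A C) (Icc v π) := by
  refine strictAntiOn_of_deriv_neg (convex_Icc _ _) (continuous_totalForce γ A C).continuousOn ?_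
  intro u hu
  rw [interior_Icc] at hu
  rw [deriv_totalForce]
  by_contra! hnn
  exact h.not_gt (totalForceDeriv_pos_of_lt hγ hC hv hu.1 hu.2.le hnn)

/-- A zero that is not the first one lies in `(π / 2, π]` and has negative slope. -/
theorem totalForceDeriv_neg_of_zeros {γ A C a b : ℝ} (hγ : γ ∈ Ico 0 (π / 2)) (hA : 0 < A)
    (hC : 0 < C) (ha0 : 0 ≤ a) (hab : a < b) (hb : b ≤ π) (ha : totalForce γ A C a = 0)
    (hb0 : totalForce γ A C b = 0) : π / 2 < b ∧ totalForceDeriv γ C b < 0 := by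
  have hlt : π / 2 < b := by
    by_contra! hle
    exact (totalForce_pos_of_zero_lt hγ hA hC ha0 hab hle ha).ne' hb0
  refine ⟨hlt, ?_⟩
  by_contra! hnn
  have hmono := strictMonoOn_totalForce A hγ hC hb hnn
  rcases lt_or_ge a (π / 2) with h | h
  · have h1 := totalForce_pos_of_zero_lt hγ hA hC ha0 h le_rfl ha
    have h2 := hmono ⟨le_rfl, hlt.le⟩ ⟨hlt.le, le_rfl⟩ hlt
    linarith
  · have h2 := hmono ⟨h, hab.le⟩ ⟨hlt.le, le_rfl⟩ hab
    linarith

theorem totalForce_not_three_zeros {γ A C a b c : ℝ} (hγ : γ ∈ Ico 0 (π / 2)) (hA : 0 < A)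
    (hC : 0 < C) (ha0 : 0 ≤ a) (hab : a < b) (hbc : b < c) (hc : c ≤ π)
    (ha : totalForce γ A C a = 0) (hb : totalForce γ A C b = 0) : totalForce γ A C c ≠ 0 := by
  obtain ⟨h1, h2⟩ := totalForceDeriv_neg_of_zeros hγ hA hC ha0 hab (hbc.le.trans hc) ha hb
  have h3 := strictAntiOn_totalForce A hγ hC h1.le h2 ⟨le_rfl, hbc.le.trans hc⟩
    ⟨hbc.le, hc⟩ hbc
  exact (h3.trans_eq hb).ne

/-- For `γ ∈ [0, π/2)` and `A, C > 0`: if `F′(π) = −4·C·sin(γ/2) + 2·cos γ ≥ 0` then `F` has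
at most one zero on `[0, π]`; if `F′(π) < 0` then `F` has at most two zeros on `[0, π]`. -/
theorem total_force_zero_count_acute (γ A C : ℝ)
    (hγ : γ ∈ Set.Ico (0 : ℝ) (Real.pi / 2)) (hA : 0 < A) (hC : 0 < C)
    (F : ℝ → ℝ)
    (hF : F = fun φ => -A * C ^ 2 - 2 * Real.sin (φ + γ)
      - 4 * C * Real.cos ((φ + γ) / 2) * Real.sin φ
      - (1 / 2) * C ^ 2 * Real.sin (2 * φ) + C ^ 2 * φ) :
    (0 ≤ -4 * C * Real.sin (γ / 2) + 2 * Real.cos γ →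
      Set.encard {φ ∈ Set.Icc (0 : ℝ) Real.pi | F φ = 0} ≤ 1) ∧
    (-4 * C * Real.sin (γ / 2) + 2 * Real.cos γ < 0 →
      Set.encard {φ ∈ Set.Icc (0 : ℝ) Real.pi | F φ = 0} ≤ 2) := by
  obtain rfl : F = totalForce γ A C := hF
  rw [← totalForceDeriv_pi]
  constructor
  · intro hpi
    have key : ∀ a b, 0 ≤ a → a < b → b ≤ π → totalForce γ A C a = 0 →
        totalForce γ A C b ≠ 0 := by
      intro a b ha0 hab hb ha hb0
      obtain ⟨h1, h2⟩ := totalForceDeriv_neg_of_zeros hγ hA hC ha0 hab hb ha hb0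
      rcases hb.eq_or_lt with rfl | hlt
      · exact h2.not_ge hpi
      · exact h2.not_gt (totalForceDeriv_pos_of_lt hγ hC h1.le hlt le_rfl hpi)
    rw [encard_le_one_iff]
    rintro a b ⟨⟨ha0, ha1⟩, ha⟩ ⟨⟨hb0, hb1⟩, hb⟩
    rcases lt_trichotomy a b with h | h | h
    · exact absurd hb (key a b ha0 h hb1 ha)
    · exact h
    · exact absurd ha (key b a hb0 h ha1 hb)
  · intro _
    by_cases hex : ∃ a b, 0 ≤ a ∧ a < b ∧ b ≤ π ∧ totalForce γ A C a = 0 ∧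
        totalForce γ A C b = 0
    · obtain ⟨a, b, ha0, hab, hb1, ha, hb⟩ := hex
      refine (encard_le_encard ?_).trans_eq (encard_pair hab.ne)
      rintro c ⟨⟨hc0, hc1⟩, hc⟩
      by_contra hne
      simp only [mem_insert_iff, mem_singleton_iff, not_or] at hne
      rcases lt_or_gt_of_ne hne.1 with h | h
      · exact totalForce_not_three_zeros hγ hA hC hc0 h hab hb1 hc ha hb
      rcases lt_or_gt_of_ne hne.2 with h' | h'
      · exact totalForce_not_three_zeros hγ hA hC ha0 h h' hb1 ha hc hb
      · exact totalForce_not_three_zeros hγ hA hC ha0 hab h' hc1 ha hb hc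
    · refine le_trans (encard_le_one_iff.2 ?_) one_le_two
      rintro a b ⟨⟨ha0, ha1⟩, ha⟩ ⟨⟨hb0, hb1⟩, hb⟩
      rcases lt_trichotomy a b with h | h | h
      · exact absurd ⟨a, b, ha0, h, hb1, ha, hb⟩ hex
      · exact h
      · exact absurd ⟨b, a, hb0, h, ha1, hb, ha⟩ hex
end

section
/- Let σ > 0, ρ > 0, g > 0, a > 0, m > 0 and γ ∈ [0, π]. Define E : ℝ → ℝ by E(φ) = m·g·(a·cos φ + 2·√(σ/(ρg))·cos((φ+γ)/2)) − 2·σ·a·φ·cos γ + (8/3)·σ·√(σ/(ρg))·(1 − sin³((φ+γ)/2)) + 2·σ·a·sin φ·cos(φ+γ) + (1/12)·ρ·g·a³·sin(3φ) − ρ·g·a³·φ·cos φ + (3/4)·ρ·g·a³·sin φ + a²·√(σρg)·cos((φ+γ)/2)·sin(2φ) − 2·a²·√(σρg)·φ·cos((φ+γ)/2), define F : ℝ → ℝ by F(φ) = −m·g − 2·σ·sin(φ+γ) − 4·a·√(σρg)·cos((φ+γ)/2)·sin φ − (1/2)·ρ·g·a²·sin(2φ) + ρ·g·a²·φ, and define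 h : ℝ → ℝ by h(φ) = a·cos φ + 2·√(σ/(ρg))·cos((φ+γ)/2). Then for every φ ∈ ℝ, E′(φ) = −F(φ)·h′(φ); that is, the negative derivative of the total energy with respect to the height of the center equals the total force. -/
/-- The negative derivative of the total energy with respect to the height of the center
equals the total force: `E′(φ) = −F(φ)·h′(φ)` for every `φ`. -/
theorem energy_force_relation (σ ρ g a m γ : ℝ)
    (hσ : 0 < σ) (hρ : 0 < ρ) (hg : 0 < g) (ha : 0 < a) (hm : 0 < m)
    (hγ : γ ∈ Set.Icc (0 : ℝ) Real.pi)
    (E F h : ℝ → ℝ)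
    (hE : E = fun φ =>
      m * g * (a * Real.cos φ + 2 * Real.sqrt (σ / (ρ * g)) * Real.cos ((φ + γ) / 2))
      - 2 * σ * a * φ * Real.cos γ
      + (8 / 3) * σ * Real.sqrt (σ / (ρ * g)) * (1 - Real.sin ((φ + γ) / 2) ^ 3)
      + 2 * σ * a * Real.sin φ * Real.cos (φ + γ)
      + (1 / 12) * ρ * g * a ^ 3 * Real.sin (3 * φ)
      - ρ * g * a ^ 3 * φ * Real.cos φ
      + (3 / 4) * ρ * g * a ^ 3 * Real.sin φ
      + a ^ 2 * Real.sqrt (σ * ρ * g) * Real.cos ((φ + γ) / 2) * Real.sin (2 * φ)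
      - 2 * a ^ 2 * Real.sqrt (σ * ρ * g) * φ * Real.cos ((φ + γ) / 2))
    (hF : F = fun φ =>
      -m * g - 2 * σ * Real.sin (φ + γ)
      - 4 * a * Real.sqrt (σ * ρ * g) * Real.cos ((φ + γ) / 2) * Real.sin φ
      - (1 / 2) * ρ * g * a ^ 2 * Real.sin (2 * φ)
      + ρ * g * a ^ 2 * φ)
    (hh : h = fun φ =>
      a * Real.cos φ + 2 * Real.sqrt (σ / (ρ * g)) * Real.cos ((φ + γ) / 2)) :
    ∀ φ : ℝ, deriv E φ = -F φ * deriv h φ := by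
  subst hE hF hh
  intro φ
  set L := Real.sqrt (σ / (ρ * g)) with hL
  have hL2 : σ = ρ * g * L ^ 2 := by
    rw [hL, Real.sq_sqrt (by positivity)]
    field_simp
  have hsqrt : Real.sqrt (σ * ρ * g) = ρ * g * L := by
    rw [show σ * ρ * g = (ρ * g * L) ^ 2 by rw [hL2]; ring]
    exact Real.sqrt_sq (by positivity)
  have hid := hasDerivAt_id' φ
  have hhalf := (hid.add_const γ).div_const 2
  have hcos := Real.hasDerivAt_cos φ
  have hsin := Real.hasDerivAt_sin φ
  have hh' := (hcos.const_mul a).add (hhalf.cos.const_mul (2 * L))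
  have hE' := ((((((((hh'.const_mul (m * g)).sub
    ((hid.const_mul (2 * σ * a)).mul_const (Real.cos γ))).add
    (((hhalf.sin.pow 3).const_sub 1).const_mul (8 / 3 * σ * L))).add
    ((hsin.const_mul (2 * σ * a)).mul (hid.add_const γ).cos)).add
    ((hid.const_mul 3).sin.const_mul (1 / 12 * ρ * g * a ^ 3))).sub
    ((hid.const_mul (ρ * g * a ^ 3)).mul hcos)).add
    (hsin.const_mul (3 / 4 * ρ * g * a ^ 3))).add
    ((hhalf.cos.const_mul (a ^ 2 * Real.sqrt (σ * ρ * g))).mul (hid.const_mul 2).sin)).sub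
    ((hid.const_mul (2 * a ^ 2 * Real.sqrt (σ * ρ * g))).mul hhalf.cos)
  refine (hE'.deriv.trans ?_).trans (congrArg _ hh'.deriv.symm)
  simp only [hsqrt]
  obtain ⟨θ, rfl⟩ : ∃ θ, γ = 2 * θ - φ := ⟨(φ + γ) / 2, by ring⟩
  rw [show φ + (2 * θ - φ) = 2 * θ by ring, show 2 * θ / 2 = θ by ring, Real.cos_sub,
    Real.cos_three_mul, Real.sin_two_mul, Real.sin_two_mul, Real.cos_two_mul, Real.cos_two_mul]
  clear_value L
  subst hL2
  push_cast
  linear_combination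
    (ρ * g * a ^ 3 * Real.cos φ + 4 * a ^ 2 * (ρ * g * L) * Real.cos θ) * Real.sin_sq_add_cos_sq φ
end

section
/- Let γ ∈ [0, π/2) and φ ∈ (0, π/2 − γ]. Set w = φ − (1/2)·sin(2φ), p = −4·cos((φ+γ)/2)·sin φ, q = −2·sin(φ+γ), and C = (−p + √(p² − 4·w·q))/(2·w). Then the intersection function is strictly positive at (φ, C): I(φ, C) = C·sin φ − √2 − ln(tan(π/8)) + 2·sin((φ+γ)/2) + ln|tan((φ+γ−π)/4)| > 0. (Consequently, for γ ≤ π/2 every equilibrium wetting angle lies in the non-intersection region.) -/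
open Real in
/-- On `(0, π/2]` the graph of the sine lies above that of `x * cos x`. -/
lemma mul_cos_le_sin_of_le_pi_div_two {x : ℝ} (hx : 0 < x) (hx' : x ≤ π / 2) :
    x * cos x ≤ sin x := by
  rcases hx'.lt_or_eq with h | rfl
  · have hc : 0 < cos x := cos_pos_of_mem_Ioo ⟨by linarith, h⟩
    have ht := (lt_tan hx h).le
    rwa [tan_eq_sin_div_cos, le_div_iff₀ hc] at ht
  · simp

open Real in
/-- The weight `x - sin (2x) / 2` is at most `x * sin x ^ 2` on `(0, π/2]`. -/
lemma sub_half_sin_two_mul_le {x : ℝ} (hx : 0 < x) (hx' : x ≤ π / 2) :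
    x - (1 / 2) * sin (2 * x) ≤ x * sin x ^ 2 := by
  have hc : 0 ≤ cos x := cos_nonneg_of_neg_pi_div_two_le_of_le (by linarith) hx'
  have h := mul_le_mul_of_nonneg_right (mul_cos_le_sin_of_le_pi_div_two hx hx') hc
  rw [sin_two_mul, sin_sq]
  linarith

/-- The larger root of a quadratic with `0 < w` and `q ≤ 0` is at least `-p / w`. -/
lemma neg_le_mul_larger_root {w p q : ℝ} (hw : 0 < w) (hq : q ≤ 0) :
    -p ≤ w * ((-p + Real.sqrt (p ^ 2 - 4 * w * q)) / (2 * w)) := by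
  have hs : -p ≤ Real.sqrt (p ^ 2 - 4 * w * q) :=
    Real.le_sqrt_of_sq_le (by nlinarith [mul_nonneg hw.le (neg_nonneg.2 hq)])
  have : w * ((-p + Real.sqrt (p ^ 2 - 4 * w * q)) / (2 * w))
      = (-p + Real.sqrt (p ^ 2 - 4 * w * q)) / 2 := by
    field_simp
  linarith

open Real in
/-- For `s ∈ [0, π/2]`, `ln (tan (π/8)) ≤ ln |tan ((s - π)/4)|`. -/
lemma log_tan_pi_div_eight_le {s : ℝ} (hs : 0 ≤ s) (hs' : s ≤ π / 2) :
    log (tan (π / 8)) ≤ log |tan ((s - π) / 4)| := by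
  have hpi := pi_pos
  have h8 : 0 < tan (π / 8) := tan_pos_of_pos_of_lt_pi_div_two (by linarith) (by linarith)
  have hle : tan (π / 8) ≤ tan ((π - s) / 4) :=
    strictMonoOn_tan.monotoneOn ⟨by linarith, by linarith⟩ ⟨by linarith, by linarith⟩ (by linarith)
  have hneg : (s - π) / 4 = -((π - s) / 4) := by ring
  rw [hneg, tan_neg, abs_neg, abs_of_pos (h8.trans_le hle)]
  exact log_le_log h8 hle

/-- For `γ ∈ [0, π/2)` and `φ ∈ (0, π/2 − γ]`, with `C` the positive root of the equilibrium
quadratic `w·C² + p·C + q = 0` (with `A = 0`), the intersection function is strictly positive: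
`I(φ, C) = C·sin φ − √2 − ln(tan(π/8)) + 2·sin((φ+γ)/2) + ln|tan((φ+γ−π)/4)| > 0`. -/
theorem equilibrium_not_in_intersection_region_acute (γ φ : ℝ)
    (hγ : γ ∈ Set.Ico (0 : ℝ) (Real.pi / 2))
    (hφ : φ ∈ Set.Ioc (0 : ℝ) (Real.pi / 2 - γ))
    (w p q C : ℝ)
    (hw : w = φ - (1 / 2) * Real.sin (2 * φ))
    (hp : p = -4 * Real.cos ((φ + γ) / 2) * Real.sin φ)
    (hq : q = -2 * Real.sin (φ + γ))
    (hC : C = (-p + Real.sqrt (p ^ 2 - 4 * w * q)) / (2 * w)) :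
    0 < C * Real.sin φ - Real.sqrt 2 - Real.log (Real.tan (Real.pi / 8))
      + 2 * Real.sin ((φ + γ) / 2) + Real.log |Real.tan ((φ + γ - Real.pi) / 4)| := by
  obtain ⟨hγ0, -⟩ := hγ
  obtain ⟨hφ0, hφ1⟩ := hφ
  have hpi := Real.pi_pos
  have hφ2 : φ ≤ Real.pi / 2 := by linarith
  have hsin : 0 < Real.sin φ := Real.sin_pos_of_pos_of_lt_pi hφ0 (by linarith)
  have hw0 : 0 < w := by
    have := Real.sin_lt (show 0 < 2 * φ by linarith)
    linarith
  have hwle : w ≤ φ * Real.sin φ ^ 2 := hw ▸ sub_half_sin_two_mul_le hφ0 hφ2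
  have hcos : Real.sqrt 2 / 2 ≤ Real.cos ((φ + γ) / 2) := by
    rw [← Real.cos_pi_div_four]
    exact Real.cos_le_cos_of_nonneg_of_le_pi (by linarith) (by linarith) (by linarith)
  have h2 : 0 < Real.sqrt 2 := by positivity
  have hq0 : q ≤ 0 := by
    have := Real.sin_nonneg_of_nonneg_of_le_pi (x := φ + γ) (by linarith) (by linarith)
    linarith
  have hroot : -p ≤ w * C := hC ▸ neg_le_mul_larger_root hw0 hq0
  have hCsin : Real.sqrt 2 < C * Real.sin φ := by
    refine lt_of_mul_lt_mul_left ?_ hw0.le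
    have hsq : 0 < Real.sqrt 2 * Real.sin φ ^ 2 := by positivity
    calc w * Real.sqrt 2 ≤ φ * Real.sin φ ^ 2 * Real.sqrt 2 := by gcongr
      _ = φ * (Real.sqrt 2 * Real.sin φ ^ 2) := by ring
      _ < 2 * (Real.sqrt 2 * Real.sin φ ^ 2) := by
        gcongr
        linarith [Real.pi_lt_four]
      _ = 4 * (Real.sqrt 2 / 2) * Real.sin φ * Real.sin φ := by ring
      _ ≤ 4 * Real.cos ((φ + γ) / 2) * Real.sin φ * Real.sin φ := by gcongr
      _ = -p * Real.sin φ := by rw [hp]; ring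
      _ ≤ w * C * Real.sin φ := by gcongr
      _ = w * (C * Real.sin φ) := by ring
  have hlog := log_tan_pi_div_eight_le (s := φ + γ) (by linarith) (by linarith)
  have hhalf : 0 < Real.sin ((φ + γ) / 2) :=
    Real.sin_pos_of_pos_of_lt_pi (by linarith) (by linarith)
  linarith
end

section
/- Let γ ∈ (π/2, π] and φ ∈ (3π/2 − γ, π). Set w̄ = 1 − cos(2φ), p̄ = 2·sin((φ+γ)/2)·sin φ − 4·cos((φ+γ)/2)·cos φ, q̄ = −2·cos(φ+γ), and C = (−p̄ + √(p̄² − 4·w̄·q̄))/(2·w̄). Then the intersection function is strictly positive at (φ, C): I(φ, C) = C·sin φ − √2 − ln(tan(π/8)) + 2·sin((φ+γ)/2) + ln|tan((φ+γ−π)/4)| > 0. (Consequently, for γ > π/2 the stable equilibrium always lies in the non-intersection region.) -/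
/-- For `γ ∈ (π/2, π]` and `φ ∈ (3π/2 − γ, π)`, with `C` the positive root of the
critical-point quadratic `w̄·C² + p̄·C + q̄ = 0`, the intersection function is strictly
positive: `I(φ, C) = C·sin φ − √2 − ln(tan(π/8)) + 2·sin((φ+γ)/2) + ln|tan((φ+γ−π)/4)| > 0`. -/
theorem stable_equilibrium_not_in_intersection_region_obtuse (γ φ : ℝ)
    (hγ : γ ∈ Set.Ioc (Real.pi / 2) Real.pi)
    (hφ : φ ∈ Set.Ioo (3 * Real.pi / 2 - γ) Real.pi)
    (w p q C : ℝ)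
    (hw : w = 1 - Real.cos (2 * φ))
    (hp : p = 2 * Real.sin ((φ + γ) / 2) * Real.sin φ
      - 4 * Real.cos ((φ + γ) / 2) * Real.cos φ)
    (hq : q = -2 * Real.cos (φ + γ))
    (hC : C = (-p + Real.sqrt (p ^ 2 - 4 * w * q)) / (2 * w)) :
    0 < C * Real.sin φ - Real.sqrt 2 - Real.log (Real.tan (Real.pi / 8))
      + 2 * Real.sin ((φ + γ) / 2) + Real.log |Real.tan ((φ + γ - Real.pi) / 4)| := by
  obtain ⟨hγ1, hγ2⟩ := hγ
  obtain ⟨hφ1, hφ2⟩ := hφ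
  have hpi := Real.pi_pos
  have hsinφ : 0 < Real.sin φ := Real.sin_pos_of_pos_of_lt_pi (by linarith) hφ2
  have hsinγ : 0 ≤ Real.sin γ := Real.sin_nonneg_of_nonneg_of_le_pi (by linarith) hγ2
  have hS : 0 < Real.sin ((φ + γ) / 2) :=
    Real.sin_pos_of_pos_of_lt_pi (by linarith) (by linarith)
  have hcos : 0 < Real.cos (φ + γ) := by
    rw [← Real.cos_sub_two_pi]
    exact Real.cos_pos_of_mem_Ioo ⟨by linarith, by linarith⟩
  have hsub : Real.sin γ = Real.sin (φ + γ) * Real.cos φ - Real.cos (φ + γ) * Real.sin φ := by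
    rw [← Real.sin_sub]; congr 1; ring
  have hsin2 : Real.sin (φ + γ) = 2 * Real.sin ((φ + γ) / 2) * Real.cos ((φ + γ) / 2) := by
    rw [← Real.sin_two_mul]; congr 1; ring
  have hcos2 : Real.cos (φ + γ) = 1 - 2 * Real.sin ((φ + γ) / 2) ^ 2 := by
    have h := Real.cos_two_mul' ((φ + γ) / 2)
    rw [mul_div_cancel₀ _ (two_ne_zero)] at h
    linarith [Real.sin_sq_add_cos_sq ((φ + γ) / 2)]
  have hw' : w = 2 * Real.sin φ ^ 2 := by
    rw [hw, Real.cos_two_mul']; linarith [Real.sin_sq_add_cos_sq φ]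
  have htan : Real.tan (Real.pi / 8) < Real.tan ((φ + γ - Real.pi) / 4) :=
    Real.tan_lt_tan_of_lt_of_lt_pi_div_two (by linarith) (by linarith) (by linarith)
  have htan8 : 0 < Real.tan (Real.pi / 8) :=
    Real.tan_pos_of_pos_of_lt_pi_div_two (by linarith) (by linarith)
  have hlog := Real.log_lt_log htan8 htan
  rw [abs_of_pos (htan8.trans htan)]
  rw [hsin2] at hsub
  generalize Real.sin ((φ + γ) / 2) = S at *
  generalize Real.cos ((φ + γ) / 2) = K at *
  generalize Real.cos (φ + γ) = D at *
  generalize Real.sin φ = a at *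
  generalize Real.cos φ = b at *
  have hwpos : 0 < w := by rw [hw']; positivity
  -- `D / (S * a)` is the critical value for `γ = π`; the quadratic is nonpositive there.
  have hquad : w * (D / (S * a)) ^ 2 + p * (D / (S * a)) + q ≤ 0 := by
    have h : w * (D / (S * a)) ^ 2 + p * (D / (S * a)) + q
        = -(2 * D * Real.sin γ / (S ^ 2 * a)) := by
      rw [hw', hp, hq, hsub]; field_simp; ring
    rw [h, neg_nonpos]
    positivity
  have hC' : D / (S * a) ≤ C := by
    rw [hC, le_div_iff₀ (by positivity)]
    have h := Real.abs_le_sqrt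
      (show (2 * w * (D / (S * a)) + p) ^ 2 ≤ p ^ 2 - 4 * w * q by
        nlinarith [mul_nonpos_of_nonneg_of_nonpos hwpos.le hquad])
    linarith [le_abs_self (2 * w * (D / (S * a)) + p)]
  have hx : 1 / S - 2 * S ≤ C * a := by
    have h := mul_le_mul_of_nonneg_right hC' hsinφ.le
    have h2 : D / (S * a) * a = 1 / S - 2 * S := by rw [hcos2]; field_simp
    linarith
  have hsqrt : Real.sqrt 2 < 1 / S := by
    rw [Real.sqrt_lt' (by positivity), div_pow, lt_div_iff₀ (by positivity)]
    linarith
  linarith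
end
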